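/- Let L > 0, let q_e : 𝕋_L → ℝ be smooth with q_e > 0, and let g : 𝕋_L → ℝ be smooth. Set ω̄* := ( (1/L)∫₀^L (2 g q_e² + ε g² q_e) ds ) / ( (1/L)∫₀^L q_e³ ds ). There exists ε₀ ∈ (0,1), depending only on q_e, g, L, such that for all 0 < ε < ε₀ the following holds. Let ω' > 0 with (ω')² = 1 − ε ω̄' for some ω̄' with |ω̄' − ω̄*| ≤ ε^{0.97}, let Q_prev be smooth on 𝕋_L × [0,∞) with ‖Q_prev‖_{X_{2,50}} ≤ ε^{0.99}, and let ω̄ ∈ ℝ with |ω̄ − ω̄*| ≤ ε^{0.97}. Suppose Q is a smooth solution on 𝕋_L × [0,∞) of ∂_s Q − ω' q_e(s) ∂_ψ² Q = f(Q_prev, s; ω') with Q(s,0) = ε ω̄ q_e(s)² + 2ε g(s) q_e(s) + ε² g(s)², Q(s,ψ) → 0 as ψ → ∞, and ‖Q‖_{X_{2,50}} < ∞, where f(Q_prev,s;ω') := (1 − ω' q_e(s)/√((ω')² q_e(s)² + Q_prev)) ∂_s Q_prev. Then ‖Q‖_{X_{2,50}} ≤ ε^{0.99}. -/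

import Mathlib

open MeasureTheory Set Function Filter

/-- `k`-th partial derivative in the tangential variable `s` of a function on
`𝕋_L × [0,∞)` (represented as a curried function `ℝ → ℝ → ℝ`). -/
noncomputable def dS (k : ℕ) (h : ℝ → ℝ → ℝ) : ℝ → ℝ → ℝ :=
  fun s ψ => iteratedDeriv k (fun s' => h s' ψ) s

/-- `j`-th partial derivative in the normal (von Mises) variable `ψ`. -/
noncomputable def dPsi (j : ℕ) (h : ℝ → ℝ → ℝ) : ℝ → ℝ → ℝ :=
  fun s ψ => iteratedDeriv j (fun ψ' => h s ψ') ψ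

/-- Squared `L²` norm over `𝕋_L × ℝ₊` (fundamental domain `(0,L] × (0,∞)`). -/
noncomputable def L2sq (L : ℝ) (h : ℝ → ℝ → ℝ) : ℝ :=
  ∫ p in Ioc (0:ℝ) L ×ˢ Ioi (0:ℝ), (h p.1 p.2) ^ 2

/-- Square-integrability over `𝕋_L × ℝ₊`. -/
def FiniteL2 (L : ℝ) (h : ℝ → ℝ → ℝ) : Prop :=
  IntegrableOn (fun p : ℝ × ℝ => (h p.1 p.2) ^ 2) (Ioc (0:ℝ) L ×ˢ Ioi (0:ℝ))

/-- The weight `⟨ψ⟩^m h`. -/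
noncomputable def wt (m : ℕ) (h : ℝ → ℝ → ℝ) : ℝ → ℝ → ℝ :=
  fun s ψ => (1 + ψ) ^ m * h s ψ

/-- Squared `X_{k,m}` norm:
`‖h‖²_{X_{k,m}} = Σ_{k'≤k} Σ_{m'≤m} (‖⟨ψ⟩^{m'}∂_s^{k'}h‖² + ‖⟨ψ⟩^{m'}∂_s^{k'+1}h‖²
+ ‖⟨ψ⟩^{m'}∂_ψ∂_s^{k'}h‖² + ‖⟨ψ⟩^{m'}∂_ψ²∂_s^{k'}h‖²)`. -/
noncomputable def XnormSq (L : ℝ) (k m : ℕ) (h : ℝ → ℝ → ℝ) : ℝ :=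
  ∑ k' ∈ Finset.range (k+1), ∑ m' ∈ Finset.range (m+1),
    (L2sq L (wt m' (dS k' h)) + L2sq L (wt m' (dS (k'+1) h))
      + L2sq L (wt m' (dPsi 1 (dS k' h))) + L2sq L (wt m' (dPsi 2 (dS k' h))))

/-- The `X_{k,m}` norm. -/
noncomputable def Xnorm (L : ℝ) (k m : ℕ) (h : ℝ → ℝ → ℝ) : ℝ :=
  Real.sqrt (XnormSq L k m h)

/-- Membership in the space `X_{k,m}`: all the defining integrands are integrable. -/
def XFinite (L : ℝ) (k m : ℕ) (h : ℝ → ℝ → ℝ) : Prop :=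
  ∀ k' ≤ k, ∀ m' ≤ m,
    FiniteL2 L (wt m' (dS k' h)) ∧ FiniteL2 L (wt m' (dS (k'+1) h))
      ∧ FiniteL2 L (wt m' (dPsi 1 (dS k' h))) ∧ FiniteL2 L (wt m' (dPsi 2 (dS k' h)))

/-- Joint smoothness of a curried function of two real variables. -/
def Smooth2 (h : ℝ → ℝ → ℝ) : Prop :=
  ContDiff ℝ (⊤ : ℕ∞) (fun p : ℝ × ℝ => h p.1 p.2)

/-- Periodicity in the first (tangential) variable. -/
def PeriodicS (L : ℝ) (h : ℝ → ℝ → ℝ) : Prop :=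
  ∀ ψ : ℝ, Function.Periodic (fun s => h s ψ) L

/-- Squared `H^n` norm of a function on `𝕋_L`. -/
noncomputable def HnormSq (L : ℝ) (n : ℕ) (b : ℝ → ℝ) : ℝ :=
  ∑ j ∈ Finset.range (n+1), ∫ s in (0:ℝ)..L, (iteratedDeriv j b s) ^ 2

/-- The explicit (leading) part of the Feynman–Lagerstrom constant. -/
noncomputable def omegaBarStar (L : ℝ) (q_e g : ℝ → ℝ) (ε : ℝ) : ℝ :=
  ((1/L) * ∫ s in (0:ℝ)..L, (2 * g s * (q_e s) ^ 2 + ε * (g s) ^ 2 * q_e s))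
    / ((1/L) * ∫ s in (0:ℝ)..L, (q_e s) ^ 3)

/-- The Prandtl nonlinearity `f(Q,s;ω) = (1 − ωq_e/√(ω²q_e² + Q)) ∂_s Q`. -/
noncomputable def fNonlin (q_e : ℝ → ℝ) (ω : ℝ) (Q : ℝ → ℝ → ℝ) : ℝ → ℝ → ℝ :=
  fun s ψ => (1 - ω * q_e s / Real.sqrt (ω ^ 2 * (q_e s) ^ 2 + Q s ψ)) * dS 1 Q s ψ


/-! ### Part 1: calculus of smooth functions of two variables -/

namespace BQ

/-- first partial derivative in `s` -/
noncomputable def ds (h : ℝ → ℝ → ℝ) : ℝ → ℝ → ℝ := fun s ψ => deriv (fun s' => h s' ψ) s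

/-- first partial derivative in `ψ` -/
noncomputable def dp (h : ℝ → ℝ → ℝ) : ℝ → ℝ → ℝ := fun s ψ => deriv (fun ψ' => h s ψ') ψ

lemma sm_diffAt {h : ℝ → ℝ → ℝ} (hh : Smooth2 h) (p : ℝ × ℝ) :
    DifferentiableAt ℝ (fun p : ℝ × ℝ => h p.1 p.2) p :=
  (ContDiff.differentiable hh (by simp)) p

lemma has_s' {h : ℝ → ℝ → ℝ} (hh : Smooth2 h) (s ψ : ℝ) :
    HasDerivAt (fun s' => h s' ψ) (fderiv ℝ (fun p : ℝ × ℝ => h p.1 p.2) (s, ψ) (1, 0)) s := by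
  have h1 : HasDerivAt (fun s' : ℝ => ((s', ψ) : ℝ × ℝ)) (1, 0) s :=
    (hasDerivAt_id s).prodMk (hasDerivAt_const s ψ)
  exact (sm_diffAt hh (s, ψ)).hasFDerivAt.comp_hasDerivAt s h1

lemma has_p' {h : ℝ → ℝ → ℝ} (hh : Smooth2 h) (s ψ : ℝ) :
    HasDerivAt (fun ψ' => h s ψ') (fderiv ℝ (fun p : ℝ × ℝ => h p.1 p.2) (s, ψ) (0, 1)) ψ := by
  have h1 : HasDerivAt (fun ψ' : ℝ => ((s, ψ') : ℝ × ℝ)) (0, 1) ψ :=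
    (hasDerivAt_const ψ s).prodMk (hasDerivAt_id ψ)
  exact (sm_diffAt hh (s, ψ)).hasFDerivAt.comp_hasDerivAt ψ h1

lemma has_s {h : ℝ → ℝ → ℝ} (hh : Smooth2 h) (s ψ : ℝ) :
    HasDerivAt (fun s' => h s' ψ) (ds h s ψ) s := (has_s' hh s ψ).differentiableAt.hasDerivAt

lemma has_p {h : ℝ → ℝ → ℝ} (hh : Smooth2 h) (s ψ : ℝ) :
    HasDerivAt (fun ψ' => h s ψ') (dp h s ψ) ψ := (has_p' hh s ψ).differentiableAt.hasDerivAt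

lemma ds_eq {h : ℝ → ℝ → ℝ} (hh : Smooth2 h) (s ψ : ℝ) :
    ds h s ψ = fderiv ℝ (fun p : ℝ × ℝ => h p.1 p.2) (s, ψ) (1, 0) := (has_s' hh s ψ).deriv

lemma dp_eq {h : ℝ → ℝ → ℝ} (hh : Smooth2 h) (s ψ : ℝ) :
    dp h s ψ = fderiv ℝ (fun p : ℝ × ℝ => h p.1 p.2) (s, ψ) (0, 1) := (has_p' hh s ψ).deriv

lemma sm_fderiv {h : ℝ → ℝ → ℝ} (hh : Smooth2 h) :
    ContDiff ℝ (⊤ : ℕ∞) (fderiv ℝ (fun p : ℝ × ℝ => h p.1 p.2)) :=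
  ContDiff.fderiv_right hh (by simp)

lemma sm_ds {h : ℝ → ℝ → ℝ} (hh : Smooth2 h) : Smooth2 (ds h) := by
  have : (fun p : ℝ × ℝ => ds h p.1 p.2)
      = fun p => fderiv ℝ (fun p : ℝ × ℝ => h p.1 p.2) p (1, 0) := by
    funext p; exact ds_eq hh p.1 p.2
  unfold Smooth2
  rw [this]
  exact (sm_fderiv hh).clm_apply contDiff_const

lemma sm_dp {h : ℝ → ℝ → ℝ} (hh : Smooth2 h) : Smooth2 (dp h) := by
  have : (fun p : ℝ × ℝ => dp h p.1 p.2)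
      = fun p => fderiv ℝ (fun p : ℝ × ℝ => h p.1 p.2) p (0, 1) := by
    funext p; exact dp_eq hh p.1 p.2
  unfold Smooth2
  rw [this]
  exact (sm_fderiv hh).clm_apply contDiff_const

lemma ds_dp {h : ℝ → ℝ → ℝ} (hh : Smooth2 h) : ds (dp h) = dp (ds h) := by
  funext s ψ
  rw [ds_eq (sm_dp hh), dp_eq (sm_ds hh)]
  have e1 : (fun p : ℝ × ℝ => dp h p.1 p.2)
      = fun p => fderiv ℝ (fun p : ℝ × ℝ => h p.1 p.2) p (0, 1) := by
    funext p; exact dp_eq hh p.1 p.2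
  have e2 : (fun p : ℝ × ℝ => ds h p.1 p.2)
      = fun p => fderiv ℝ (fun p : ℝ × ℝ => h p.1 p.2) p (1, 0) := by
    funext p; exact ds_eq hh p.1 p.2
  have hd : DifferentiableAt ℝ (fderiv ℝ (fun p : ℝ × ℝ => h p.1 p.2)) (s, ψ) :=
    (sm_fderiv hh).differentiable (by simp) _
  rw [e1, e2, fderiv_clm_apply hd (differentiableAt_const _),
    fderiv_clm_apply hd (differentiableAt_const _)]
  have hsym : IsSymmSndFDerivAt ℝ (fun p : ℝ × ℝ => h p.1 p.2) (s, ψ) :=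
    (ContDiff.contDiffAt hh).isSymmSndFDerivAt (by
      simp only [minSmoothness_of_isRCLikeNormedField]
      exact WithTop.coe_le_coe.2 (le_top : (2:ℕ∞) ≤ ⊤))
  simpa using hsym.eq (1, 0) (0, 1)

lemma sm_cont {h : ℝ → ℝ → ℝ} (hh : Smooth2 h) : Continuous (fun p : ℝ × ℝ => h p.1 p.2) :=
  ContDiff.continuous hh

lemma sm_cont_s {h : ℝ → ℝ → ℝ} (hh : Smooth2 h) (ψ : ℝ) : Continuous (fun s => h s ψ) :=
  (sm_cont hh).comp (by fun_prop : Continuous fun s : ℝ => ((s, ψ) : ℝ × ℝ))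

lemma sm_mul {u v : ℝ → ℝ → ℝ} (hu : Smooth2 u) (hv : Smooth2 v) :
    Smooth2 (fun s ψ => u s ψ * v s ψ) := ContDiff.mul hu hv

lemma sm_add {u v : ℝ → ℝ → ℝ} (hu : Smooth2 u) (hv : Smooth2 v) :
    Smooth2 (fun s ψ => u s ψ + v s ψ) := ContDiff.add hu hv

lemma sm_sub {u v : ℝ → ℝ → ℝ} (hu : Smooth2 u) (hv : Smooth2 v) :
    Smooth2 (fun s ψ => u s ψ - v s ψ) := ContDiff.sub hu hv

lemma sm_fst {a : ℝ → ℝ} (ha : ContDiff ℝ (⊤ : ℕ∞) a) : Smooth2 (fun s _ => a s) :=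
  ha.comp contDiff_fst

lemma dS_zero (h : ℝ → ℝ → ℝ) : dS 0 h = h := by
  funext s ψ; simp [dS]

lemma dS_succ (k : ℕ) (h : ℝ → ℝ → ℝ) : dS (k + 1) h = ds (dS k h) := by
  funext s ψ
  simp only [dS, ds]
  rw [iteratedDeriv_succ]

lemma dS_one (h : ℝ → ℝ → ℝ) : dS 1 h = ds h := by
  rw [dS_succ, dS_zero]

lemma dPsi_one (h : ℝ → ℝ → ℝ) : dPsi 1 h = dp h := by
  funext s ψ
  simp only [dPsi, dp]
  rw [iteratedDeriv_one]

lemma dPsi_two (h : ℝ → ℝ → ℝ) : dPsi 2 h = dp (dp h) := by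
  funext s ψ
  simp only [dPsi, dp]
  rw [iteratedDeriv_succ, iteratedDeriv_one]

lemma per_ds {L : ℝ} {h : ℝ → ℝ → ℝ} (hp : PeriodicS L h) : PeriodicS L (ds h) := by
  intro ψ s
  have e : (fun s' => h s' ψ) = fun s' => h (s' + L) ψ := by
    funext s'; exact (hp ψ s').symm
  simp only [ds]
  conv_rhs => rw [e]
  exact (deriv_comp_add_const (fun s' => h s' ψ) L s).symm

lemma per_dp {L : ℝ} {h : ℝ → ℝ → ℝ} (hp : PeriodicS L h) : PeriodicS L (dp h) := by
  intro ψ s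
  have e : (fun ψ' => h (s + L) ψ') = fun ψ' => h s ψ' := by
    funext ψ'; exact hp ψ' s
  simp only [dp]
  rw [e]

/-! ### slice integrals -/

/-- slice integral -/
noncomputable def J (L : ℝ) (u : ℝ → ℝ → ℝ) (ψ : ℝ) : ℝ := ∫ s in (0:ℝ)..L, u s ψ

lemma J_int {u : ℝ → ℝ → ℝ} (hu : Smooth2 u) (ψ a b : ℝ) :
    IntervalIntegrable (fun s => u s ψ) volume a b := (sm_cont_s hu ψ).intervalIntegrable _ _

lemma J_hasDeriv (L : ℝ) {u : ℝ → ℝ → ℝ} (hu : Smooth2 u) (ψ : ℝ) :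
    HasDerivAt (J L u) (J L (dp u) ψ) ψ := by
  have hK : IsCompact ((uIcc (0:ℝ) L) ×ˢ (Icc (ψ - 1) (ψ + 1))) :=
    isCompact_uIcc.prod isCompact_Icc
  obtain ⟨C, hC⟩ := hK.exists_bound_of_continuousOn (sm_cont (sm_dp hu)).continuousOn
  have := intervalIntegral.hasDerivAt_integral_of_dominated_loc_of_deriv_le (μ := volume)
    (a := 0) (b := L) (F := fun ψ s => u s ψ) (F' := fun ψ s => dp u s ψ) (x₀ := ψ)
    (s := Icc (ψ - 1) (ψ + 1)) (bound := fun _ => C)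
    (Icc_mem_nhds (by linarith) (by linarith))
    (Eventually.of_forall fun x => (sm_cont_s hu x).aestronglyMeasurable)
    (J_int hu _ _ _)
    ((sm_cont_s (sm_dp hu) ψ).aestronglyMeasurable)
    (Eventually.of_forall fun t ht x hx => hC (t, x) ⟨uIoc_subset_uIcc ht, hx⟩)
    (by simp)
    (Eventually.of_forall fun t _ x _ => has_p hu t x)
  exact this.2

lemma J_cont (L : ℝ) {u : ℝ → ℝ → ℝ} (hu : Smooth2 u) : Continuous (J L u) :=
  continuous_iff_continuousAt.2 fun ψ => (J_hasDeriv L hu ψ).continuousAt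

lemma J_ds (L : ℝ) {u : ℝ → ℝ → ℝ} (hu : Smooth2 u) (hp : PeriodicS L u) (ψ : ℝ) :
    J L (ds u) ψ = 0 := by
  unfold J
  rw [intervalIntegral.integral_eq_sub_of_hasDerivAt (fun s _ => has_s hu s ψ)
    (J_int (sm_ds hu) _ _ _)]
  have := hp ψ 0
  simp only [zero_add] at this
  rw [this]; ring

lemma J_add (L : ℝ) {u v : ℝ → ℝ → ℝ} (hu : Smooth2 u) (hv : Smooth2 v) (ψ : ℝ) :
    J L (fun s ψ => u s ψ + v s ψ) ψ = J L u ψ + J L v ψ :=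
  intervalIntegral.integral_add (J_int hu _ _ _) (J_int hv _ _ _)

lemma J_smul (L : ℝ) (c : ℝ) (u : ℝ → ℝ → ℝ) (ψ : ℝ) :
    J L (fun s ψ => c * u s ψ) ψ = c * J L u ψ :=
  intervalIntegral.integral_const_mul _ _

lemma J_mono {L : ℝ} (hL : 0 < L) {u v : ℝ → ℝ → ℝ} {ψ : ℝ} (hu : Continuous fun s => u s ψ)
    (hv : Continuous fun s => v s ψ) (h : ∀ s, u s ψ ≤ v s ψ) : J L u ψ ≤ J L v ψ :=
  intervalIntegral.integral_mono_on hL.le (hu.intervalIntegrable _ _) (hv.intervalIntegrable _ _)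
    (fun s _ => h s)

/-- the slice `L²` pairing -/
noncomputable def B (L : ℝ) (u v : ℝ → ℝ → ℝ) (ψ : ℝ) : ℝ := J L (fun s ψ => u s ψ * v s ψ) ψ

lemma B_nonneg {L : ℝ} (hL : 0 < L) (u : ℝ → ℝ → ℝ) (ψ : ℝ) : 0 ≤ B L u u ψ :=
  intervalIntegral.integral_nonneg hL.le (fun _ _ => mul_self_nonneg _)

lemma B_comm (L : ℝ) (u v : ℝ → ℝ → ℝ) (ψ : ℝ) : B L u v ψ = B L v u ψ := by
  unfold B; congr 1; funext s ψ; ring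

lemma B_cont (L : ℝ) {u v : ℝ → ℝ → ℝ} (hu : Smooth2 u) (hv : Smooth2 v) :
    Continuous (B L u v) := J_cont L (sm_mul hu hv)

/-- Young's inequality for slices -/
lemma B_young {L : ℝ} (hL : 0 < L) {u v : ℝ → ℝ → ℝ} (hu : Smooth2 u) (hv : Smooth2 v)
    {c : ℝ} (hc : 0 < c) (ψ : ℝ) :
    |B L u v ψ| ≤ c * B L u u ψ + 1 / (4 * c) * B L v v ψ := by
  have key : ∀ x y : ℝ, |x * y| ≤ c * (x * x) + 1 / (4 * c) * (y * y) := by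
    intro x y
    have h1 : c * (x * x) + 1 / (4 * c) * (y * y) - x * y
        = (2 * c * x - y) ^ 2 / (4 * c) := by field_simp; ring
    have h2 : c * (x * x) + 1 / (4 * c) * (y * y) + x * y
        = (2 * c * x + y) ^ 2 / (4 * c) := by field_simp; ring
    have h3 : 0 ≤ (2 * c * x - y) ^ 2 / (4 * c) := by positivity
    have h4 : 0 ≤ (2 * c * x + y) ^ 2 / (4 * c) := by positivity
    rw [abs_le]; constructor <;> linarith
  have hu' := sm_cont_s hu ψ
  have hv' := sm_cont_s hv ψ
  unfold B J
  rw [← intervalIntegral.integral_const_mul, ← intervalIntegral.integral_const_mul,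
    ← intervalIntegral.integral_add ((by fun_prop : Continuous _).intervalIntegrable _ _)
      ((by fun_prop : Continuous _).intervalIntegrable _ _)]
  refine (intervalIntegral.abs_integral_le_integral_abs hL.le).trans ?_
  exact intervalIntegral.integral_mono_on hL.le ((by fun_prop : Continuous _).intervalIntegrable _ _)
    ((by fun_prop : Continuous _).intervalIntegrable _ _) (fun s _ => key _ _)

/-- Cauchy-Schwarz for slices -/
lemma B_cs {L : ℝ} (hL : 0 < L) {u v : ℝ → ℝ → ℝ} (hu : Smooth2 u) (hv : Smooth2 v) (ψ : ℝ) :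
    (B L u v ψ) ^ 2 ≤ B L u u ψ * B L v v ψ := by
  have h : ∀ t : ℝ, 0 ≤ B L v v ψ * (t * t) + (2 * B L u v ψ) * t + B L u u ψ := by
    intro t
    have h0 := B_nonneg hL (fun s ψ => u s ψ + t * v s ψ) ψ
    have hu' := sm_cont_s hu ψ
    have hv' := sm_cont_s hv ψ
    have e : B L (fun s ψ => u s ψ + t * v s ψ) (fun s ψ => u s ψ + t * v s ψ) ψ
        = B L v v ψ * (t * t) + (2 * B L u v ψ) * t + B L u u ψ := by
      unfold B J
      have : ∀ s, (u s ψ + t * v s ψ) * (u s ψ + t * v s ψ)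
          = (t * t) * (v s ψ * v s ψ) + (2 * t) * (u s ψ * v s ψ) + u s ψ * u s ψ := by
        intro s; ring
      simp only [this]
      rw [intervalIntegral.integral_add ((by fun_prop : Continuous _).intervalIntegrable _ _)
        ((by fun_prop : Continuous _).intervalIntegrable _ _),
        intervalIntegral.integral_add ((by fun_prop : Continuous _).intervalIntegrable _ _)
        ((by fun_prop : Continuous _).intervalIntegrable _ _),
        intervalIntegral.integral_const_mul, intervalIntegral.integral_const_mul]
      ring
    linarith
  have := discrim_le_zero h
  unfold discrim at this
  nlinarith

end BQ

/-! ### Part 2: weighted integrals -/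

namespace BQ

/-- finiteness of the weighted norm, as an integral of slices -/
def Fin50 (L : ℝ) (u : ℝ → ℝ → ℝ) : Prop :=
  IntegrableOn (fun ψ => (1 + ψ) ^ 100 * B L u u ψ) (Ioi 0)

/-- squared weighted norm, as an integral of slices -/
noncomputable def N (L : ℝ) (u : ℝ → ℝ → ℝ) : ℝ := ∫ ψ in Ioi (0:ℝ), (1 + ψ) ^ 100 * B L u u ψ

lemma vol_prod (L : ℝ) : (volume : Measure (ℝ × ℝ)).restrict (Ioc (0:ℝ) L ×ˢ Ioi (0:ℝ))
    = (volume.restrict (Ioc (0:ℝ) L)).prod (volume.restrict (Ioi (0:ℝ))) := by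
  rw [Measure.volume_eq_prod, Measure.prod_restrict]

lemma slice_eq {L : ℝ} (hL : 0 < L) (m : ℕ) (u : ℝ → ℝ → ℝ) (ψ : ℝ) :
    ∫ s in Ioc (0:ℝ) L, (wt m u s ψ) ^ 2 = (1 + ψ) ^ (2 * m) * B L u u ψ := by
  unfold B J wt
  rw [intervalIntegral.integral_of_le hL.le, ← integral_const_mul]
  congr 1; funext s
  rw [pow_mul']; ring

lemma fin_slice {L : ℝ} (hL : 0 < L) {m : ℕ} {u : ℝ → ℝ → ℝ} (h : FiniteL2 L (wt m u)) :
    IntegrableOn (fun ψ => (1 + ψ) ^ (2 * m) * B L u u ψ) (Ioi 0) := by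
  unfold FiniteL2 IntegrableOn at h
  rw [vol_prod] at h
  have := h.integral_prod_right
  simp only [slice_eq hL] at this
  exact this

lemma L2sq_slice {L : ℝ} (hL : 0 < L) {m : ℕ} {u : ℝ → ℝ → ℝ} (h : FiniteL2 L (wt m u)) :
    L2sq L (wt m u) = ∫ ψ in Ioi (0:ℝ), (1 + ψ) ^ (2 * m) * B L u u ψ := by
  unfold FiniteL2 IntegrableOn at h
  unfold L2sq
  rw [vol_prod] at h ⊢
  rw [integral_prod_symm _ h]
  simp only [slice_eq hL]

lemma fin50_of {L : ℝ} (hL : 0 < L) {u : ℝ → ℝ → ℝ} (h : FiniteL2 L (wt 50 u)) : Fin50 L u :=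
  fin_slice hL h

lemma N_eq {L : ℝ} (hL : 0 < L) {u : ℝ → ℝ → ℝ} (h : FiniteL2 L (wt 50 u)) :
    L2sq L (wt 50 u) = N L u := L2sq_slice hL h

lemma L2sq_le {L : ℝ} (hL : 0 < L) {m : ℕ} (hm : m ≤ 50) {u : ℝ → ℝ → ℝ}
    (h : FiniteL2 L (wt m u)) (h' : FiniteL2 L (wt 50 u)) : L2sq L (wt m u) ≤ N L u := by
  rw [L2sq_slice hL h]
  refine setIntegral_mono_on (fin_slice hL h) (fin50_of hL h') measurableSet_Ioi ?_
  intro ψ hψ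
  have hψ' : (0:ℝ) < ψ := hψ
  refine mul_le_mul_of_nonneg_right ?_ (B_nonneg hL u ψ)
  exact pow_le_pow_right₀ (by linarith) (by omega)

lemma N_nonneg {L : ℝ} (hL : 0 < L) (u : ℝ → ℝ → ℝ) : 0 ≤ N L u := by
  refine setIntegral_nonneg measurableSet_Ioi fun ψ hψ => ?_
  have hψ' : (0:ℝ) < ψ := hψ
  exact mul_nonneg (by positivity) (B_nonneg hL u ψ)

/-- integrability of weighted pairings -/
lemma wint {L : ℝ} (hL : 0 < L) {w : ℝ → ℝ} (hw : Continuous w)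
    {c : ℝ} (hwb : ∀ ψ, 0 < ψ → |w ψ| ≤ c * (1 + ψ) ^ 100) {u v : ℝ → ℝ → ℝ}
    (hu : Smooth2 u) (hv : Smooth2 v) (fu : Fin50 L u) (fv : Fin50 L v) :
    IntegrableOn (fun ψ => w ψ * B L u v ψ) (Ioi 0) := by
  have hi : IntegrableOn (fun ψ => c * ((1 + ψ) ^ 100 * B L u u ψ + (1 + ψ) ^ 100 * B L v v ψ))
      (Ioi 0) := (Integrable.add fu fv).const_mul c
  refine Integrable.mono' hi ((hw.mul (B_cont L hu hv)).aestronglyMeasurable) ?_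
  refine (ae_restrict_iff' measurableSet_Ioi).2 (Eventually.of_forall fun ψ hψ => ?_)
  have hψ' : (0:ℝ) < ψ := hψ
  have h1 := B_young hL hu hv (c := 1/2) (by norm_num) ψ
  have h2 := B_nonneg hL u ψ
  have h3 := B_nonneg hL v ψ
  have h4 : |B L u v ψ| ≤ B L u u ψ + B L v v ψ := by
    norm_num at h1; linarith
  rw [Real.norm_eq_abs, abs_mul]
  calc |w ψ| * |B L u v ψ| ≤ (c * (1 + ψ) ^ 100) * (B L u u ψ + B L v v ψ) :=
        mul_le_mul (hwb ψ hψ') h4 (abs_nonneg _) ((abs_nonneg _).trans (hwb ψ hψ'))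
    _ = _ := by ring

lemma fin_of_le {L : ℝ} (hL : 0 < L) {u v v' : ℝ → ℝ → ℝ} (hu : Smooth2 u) {c c' : ℝ}
    (h : ∀ ψ, 0 < ψ → B L u u ψ ≤ c * B L v v ψ + c' * B L v' v' ψ)
    (fv : Fin50 L v) (fv' : Fin50 L v') :
    Fin50 L u ∧ N L u ≤ c * N L v + c' * N L v' := by
  have hi : IntegrableOn (fun ψ => c * ((1 + ψ) ^ 100 * B L v v ψ)
      + c' * ((1 + ψ) ^ 100 * B L v' v' ψ)) (Ioi 0) :=
    (fv.const_mul c).add (fv'.const_mul c')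
  have hle : ∀ ψ ∈ Ioi (0:ℝ), (1 + ψ) ^ 100 * B L u u ψ ≤ c * ((1 + ψ) ^ 100 * B L v v ψ)
      + c' * ((1 + ψ) ^ 100 * B L v' v' ψ) := by
    intro ψ hψ
    have hψ' : (0:ℝ) < ψ := hψ
    have := mul_le_mul_of_nonneg_left (h ψ hψ') (by positivity : 0 ≤ (1 + ψ) ^ 100)
    linarith
  have hf : Fin50 L u := by
    refine Integrable.mono' hi
      (((by fun_prop : Continuous fun ψ : ℝ => (1 + ψ) ^ 100).mul (B_cont L hu hu)).aestronglyMeasurable) ?_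
    refine (ae_restrict_iff' measurableSet_Ioi).2 (Eventually.of_forall fun ψ hψ => ?_)
    have hψ' : (0:ℝ) < ψ := hψ
    rw [Real.norm_eq_abs, abs_of_nonneg (mul_nonneg (by positivity) (B_nonneg hL u ψ))]
    exact hle ψ hψ
  refine ⟨hf, ?_⟩
  unfold N
  rw [← integral_const_mul, ← integral_const_mul, ← integral_add (fv.const_mul c) (fv'.const_mul c')]
  exact setIntegral_mono_on hf hi measurableSet_Ioi hle

/-- a coefficient multiple -/
lemma B_coef {L : ℝ} (hL : 0 < L) {a : ℝ → ℝ} (ha : ContDiff ℝ (⊤ : ℕ∞) a) {a1 : ℝ}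
    (hab : ∀ s, |a s| ≤ a1) {u : ℝ → ℝ → ℝ} (hu : Smooth2 u) (ψ : ℝ) :
    B L (fun s ψ => a s * u s ψ) (fun s ψ => a s * u s ψ) ψ ≤ a1 ^ 2 * B L u u ψ := by
  have hu' := sm_cont_s hu ψ
  have ha' := ha.continuous
  unfold B
  rw [← J_smul]
  refine J_mono hL (by fun_prop) (by fun_prop) fun s => ?_
  have h1 : a s ^ 2 ≤ a1 ^ 2 := sq_le_sq.2 ((hab s).trans (le_abs_self _))
  have h2 := mul_le_mul_of_nonneg_right h1 (mul_self_nonneg (u s ψ))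
  calc _ = a s ^ 2 * (u s ψ * u s ψ) := by ring
    _ ≤ _ := h2

lemma B_add_le {L : ℝ} (hL : 0 < L) {u v : ℝ → ℝ → ℝ} (hu : Smooth2 u) (hv : Smooth2 v) (ψ : ℝ) :
    B L (fun s ψ => u s ψ + v s ψ) (fun s ψ => u s ψ + v s ψ) ψ
      ≤ 2 * B L u u ψ + 2 * B L v v ψ := by
  have hu' := sm_cont_s hu ψ
  have hv' := sm_cont_s hv ψ
  unfold B
  rw [← J_smul, ← J_smul, ← J_add L (sm_mul (sm_fst contDiff_const) (sm_mul hu hu))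
    (sm_mul (sm_fst contDiff_const) (sm_mul hv hv))]
  refine J_mono hL (by fun_prop) (by fun_prop) fun s => ?_
  nlinarith [sq_nonneg (u s ψ - v s ψ)]

lemma dp_mul {u v : ℝ → ℝ → ℝ} (hu : Smooth2 u) (hv : Smooth2 v) :
    dp (fun s ψ => u s ψ * v s ψ) = fun s ψ => dp u s ψ * v s ψ + u s ψ * dp v s ψ := by
  funext s ψ; exact ((has_p hu s ψ).mul (has_p hv s ψ)).deriv

lemma ds_mul {u v : ℝ → ℝ → ℝ} (hu : Smooth2 u) (hv : Smooth2 v) :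
    ds (fun s ψ => u s ψ * v s ψ) = fun s ψ => ds u s ψ * v s ψ + u s ψ * ds v s ψ := by
  funext s ψ; exact ((has_s hu s ψ).mul (has_s hv s ψ)).deriv

lemma J_dp_mul (L : ℝ) {u v : ℝ → ℝ → ℝ} (hu : Smooth2 u) (hv : Smooth2 v) (ψ : ℝ) :
    J L (dp (fun s ψ => u s ψ * v s ψ)) ψ = B L (dp u) v ψ + B L u (dp v) ψ := by
  rw [dp_mul hu hv]
  exact J_add L (sm_mul (sm_dp hu) hv) (sm_mul hu (sm_dp hv)) ψ

lemma B_ds_self (L : ℝ) {u : ℝ → ℝ → ℝ} (hu : Smooth2 u) (hp : PeriodicS L u) (ψ : ℝ) :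
    B L (ds u) u ψ = 0 := by
  have hpp : PeriodicS L (fun s ψ => u s ψ * u s ψ) := by
    intro ψ s
    have := hp ψ s
    simp only at this ⊢
    rw [this]
  have h := J_ds L (sm_mul hu hu) hpp ψ
  rw [ds_mul hu hu, J_add L (sm_mul (sm_ds hu) hu) (sm_mul hu (sm_ds hu)) ψ] at h
  have h2 := B_comm L u (ds u) ψ
  unfold B at h2 ⊢
  linarith

lemma ibp {L : ℝ} (x : ℝ) {w w' : ℝ → ℝ} (hw : ∀ ψ, HasDerivAt w (w' ψ) ψ) {u : ℝ → ℝ → ℝ}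
    (hu : Smooth2 u) (i1 : IntegrableOn (fun ψ => w ψ * J L u ψ) (Ioi x))
    (i2 : IntegrableOn (fun ψ => w' ψ * J L u ψ + w ψ * J L (dp u) ψ) (Ioi x)) :
    ∫ ψ in Ioi x, (w' ψ * J L u ψ + w ψ * J L (dp u) ψ) = -(w x * J L u x) := by
  have hd : ∀ ψ, HasDerivAt (fun ψ => w ψ * J L u ψ) (w' ψ * J L u ψ + w ψ * J L (dp u) ψ) ψ :=
    fun ψ => (hw ψ).mul (J_hasDeriv L hu ψ)
  have ht := tendsto_zero_of_hasDerivAt_of_integrableOn_Ioi (fun ψ _ => hd ψ) i2 i1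
  rw [integral_Ioi_of_hasDerivAt_of_tendsto' (fun ψ _ => hd ψ) i2 ht]
  ring

/-- the slow weight -/
noncomputable def W (δ ψ : ℝ) : ℝ := (1 + δ * ψ) ^ 100

/-- its derivative -/
noncomputable def W' (δ ψ : ℝ) : ℝ := 100 * δ * (1 + δ * ψ) ^ 99

lemma W_deriv (δ ψ : ℝ) : HasDerivAt (W δ) (W' δ ψ) ψ := by
  have h : HasDerivAt (fun ψ : ℝ => 1 + δ * ψ) δ ψ := by
    simpa using ((hasDerivAt_id ψ).const_mul δ).const_add 1
  have := h.fun_pow 100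
  refine this.congr_deriv ?_
  unfold W'
  norm_num
  ring

lemma W_cont (δ : ℝ) : Continuous (W δ) := by unfold W; fun_prop

lemma W'_cont (δ : ℝ) : Continuous (W' δ) := by unfold W'; fun_prop

lemma W_zero (δ : ℝ) : W δ 0 = 1 := by simp [W]

lemma W_nonneg (δ ψ : ℝ) : 0 ≤ W δ ψ := by unfold W; exact Even.pow_nonneg (by decide) _

lemma W_le {δ ψ : ℝ} (h0 : 0 ≤ δ) (h1 : δ ≤ 1) (hψ : 0 < ψ) : W δ ψ ≤ (1 + ψ) ^ 100 := by
  unfold W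
  have : δ * ψ ≤ 1 * ψ := mul_le_mul_of_nonneg_right h1 hψ.le
  exact pow_le_pow_left₀ (by positivity) (by linarith) _

lemma W'_le {δ ψ : ℝ} (h0 : 0 ≤ δ) (hψ : 0 < ψ) : |W' δ ψ| ≤ 100 * δ * W δ ψ := by
  unfold W' W
  rw [abs_of_nonneg (by positivity)]
  refine mul_le_mul_of_nonneg_left ?_ (by positivity)
  have : 0 ≤ δ * ψ := by positivity
  exact pow_le_pow_right₀ (by linarith) (by norm_num)

lemma W_ge {δ ψ : ℝ} (h0 : 0 ≤ δ) (h1 : δ ≤ 1) (hψ : 0 < ψ) :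
    δ ^ 100 * (1 + ψ) ^ 100 ≤ W δ ψ := by
  unfold W
  rw [← mul_pow]
  exact pow_le_pow_left₀ (by positivity) (by nlinarith) _

lemma W_int {L : ℝ} (hL : 0 < L) {δ : ℝ} (h0 : 0 ≤ δ) (h1 : δ ≤ 1) {u v : ℝ → ℝ → ℝ}
    (hu : Smooth2 u) (hv : Smooth2 v) (fu : Fin50 L u) (fv : Fin50 L v) :
    IntegrableOn (fun ψ => W δ ψ * B L u v ψ) (Ioi 0) := by
  refine wint hL (W_cont δ) (c := 1) (fun ψ hψ => ?_) hu hv fu fv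
  rw [abs_of_nonneg (W_nonneg δ ψ), one_mul]
  exact W_le h0 h1 hψ

lemma W'_int {L : ℝ} (hL : 0 < L) {δ : ℝ} (h0 : 0 ≤ δ) (h1 : δ ≤ 1) {u v : ℝ → ℝ → ℝ}
    (hu : Smooth2 u) (hv : Smooth2 v) (fu : Fin50 L u) (fv : Fin50 L v) :
    IntegrableOn (fun ψ => W' δ ψ * B L u v ψ) (Ioi 0) := by
  refine wint hL (W'_cont δ) (c := 100 * δ) (fun ψ hψ => ?_) hu hv fu fv
  exact (W'_le h0 hψ).trans (mul_le_mul_of_nonneg_left (W_le h0 h1 hψ) (by positivity))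

/-- weighted squared norm with slow weight -/
noncomputable def NW (L δ : ℝ) (u : ℝ → ℝ → ℝ) : ℝ := ∫ ψ in Ioi (0:ℝ), W δ ψ * B L u u ψ

lemma NW_nonneg {L : ℝ} (hL : 0 < L) (δ : ℝ) (u : ℝ → ℝ → ℝ) : 0 ≤ NW L δ u :=
  setIntegral_nonneg measurableSet_Ioi fun ψ _ => mul_nonneg (W_nonneg δ ψ) (B_nonneg hL u ψ)

lemma NW_one (L : ℝ) (u : ℝ → ℝ → ℝ) : NW L 1 u = N L u := by
  unfold NW N W; simp

lemma NW_le {L : ℝ} (hL : 0 < L) {δ : ℝ} (h0 : 0 ≤ δ) (h1 : δ ≤ 1) {u : ℝ → ℝ → ℝ}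
    (hu : Smooth2 u) (fu : Fin50 L u) : NW L δ u ≤ N L u := by
  refine setIntegral_mono_on (W_int hL h0 h1 hu hu fu fu) fu measurableSet_Ioi fun ψ hψ => ?_
  exact mul_le_mul_of_nonneg_right (W_le h0 h1 hψ) (B_nonneg hL u ψ)

lemma NW_ge {L : ℝ} (hL : 0 < L) {δ : ℝ} (h0 : 0 ≤ δ) (h1 : δ ≤ 1) {u : ℝ → ℝ → ℝ}
    (hu : Smooth2 u) (fu : Fin50 L u) : δ ^ 100 * N L u ≤ NW L δ u := by
  unfold N NW
  rw [← integral_const_mul]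
  refine setIntegral_mono_on (fu.const_mul _) (W_int hL h0 h1 hu hu fu fu) measurableSet_Ioi
    fun ψ hψ => ?_
  have := mul_le_mul_of_nonneg_right (W_ge h0 h1 hψ) (B_nonneg hL u ψ)
  linarith

/-- integrating a pointwise linear inequality -/
lemma int_lin {f G x1 x2 x3 : ℝ → ℝ} {c1 c2 c3 : ℝ} {x : ℝ} (hf : IntegrableOn f (Ioi x))
    (hG : IntegrableOn G (Ioi x)) (h1 : IntegrableOn x1 (Ioi x)) (h2 : IntegrableOn x2 (Ioi x))
    (h3 : IntegrableOn x3 (Ioi x))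
    (h : ∀ ψ, x < ψ → f ψ ≤ G ψ + (c1 * x1 ψ + (c2 * x2 ψ + c3 * x3 ψ))) :
    ∫ ψ in Ioi x, f ψ ≤ (∫ ψ in Ioi x, G ψ) + (c1 * (∫ ψ in Ioi x, x1 ψ)
      + (c2 * (∫ ψ in Ioi x, x2 ψ) + c3 * (∫ ψ in Ioi x, x3 ψ))) := by
  have e1 := h1.const_mul c1
  have e2 := h2.const_mul c2
  have e3 := h3.const_mul c3
  have e4 : IntegrableOn (fun ψ => c2 * x2 ψ + c3 * x3 ψ) (Ioi x) := e2.add e3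
  have e5 : IntegrableOn (fun ψ => c1 * x1 ψ + (c2 * x2 ψ + c3 * x3 ψ)) (Ioi x) := e1.add e4
  rw [← integral_const_mul, ← integral_const_mul, ← integral_const_mul, ← integral_add e2 e3,
    ← integral_add e1 e4, ← integral_add hG e5]
  exact setIntegral_mono_on hf (hG.add e5) measurableSet_Ioi fun ψ hψ => h ψ hψ

/-- pointwise (in `ψ`) bound -/
lemma sup_psi {L : ℝ} (hL : 0 < L) {δ : ℝ} (h0 : 0 ≤ δ) (h1 : δ ≤ 1) {v : ℝ → ℝ → ℝ}
    (hv : Smooth2 v) (fv : Fin50 L v) (fv' : Fin50 L (dp v)) {x : ℝ} (hx : 0 ≤ x) :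
    W δ x * B L v v x ≤ (100 * δ + 1) * NW L δ v + NW L δ (dp v) := by
  have hv' := sm_dp hv
  have sub : Ioi x ⊆ Ioi (0:ℝ) := Ioi_subset_Ioi hx
  have iv0 := W_int hL h0 h1 hv hv fv fv
  have iv0' := W_int hL h0 h1 hv' hv' fv' fv'
  have iv := iv0.mono_set sub
  have iv' := iv0'.mono_set sub
  have e : ∀ ψ, W' δ ψ * J L (fun s ψ => v s ψ * v s ψ) ψ
      + W δ ψ * J L (dp (fun s ψ => v s ψ * v s ψ)) ψ
      = W' δ ψ * B L v v ψ + 2 * (W δ ψ * B L v (dp v) ψ) := by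
    intro ψ
    rw [J_dp_mul L hv hv, B_comm L (dp v) v]
    unfold B; ring
  have i2 : IntegrableOn (fun ψ => W' δ ψ * J L (fun s ψ => v s ψ * v s ψ) ψ
      + W δ ψ * J L (dp (fun s ψ => v s ψ * v s ψ)) ψ) (Ioi x) := by
    simp only [e]
    exact ((W'_int hL h0 h1 hv hv fv fv).mono_set sub).add
      (((W_int hL h0 h1 hv hv' fv fv').mono_set sub).const_mul 2)
  have key := ibp (L := L) x (W_deriv δ) (sm_mul hv hv) iv i2
  have h3 := int_lin (f := fun ψ => -(W' δ ψ * J L (fun s ψ => v s ψ * v s ψ) ψ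
      + W δ ψ * J L (dp (fun s ψ => v s ψ * v s ψ)) ψ)) (G := fun _ => 0)
      (x1 := fun ψ => W δ ψ * B L v v ψ) (x2 := fun ψ => W δ ψ * B L (dp v) (dp v) ψ)
      (x3 := fun _ => 0) (c1 := 100 * δ + 1) (c2 := 1) (c3 := 0)
      i2.neg integrableOn_zero iv iv' integrableOn_zero (by
        intro ψ hψ
        have hψ0 : 0 < ψ := hx.trans_lt hψ
        rw [e ψ]
        have q1 := W'_le h0 hψ0
        have q2 := abs_le.1 q1
        have q3 := abs_le.1 (B_young hL hv hv' (c := 1/2) (by norm_num) ψ)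
        norm_num at q3
        have q4 := B_nonneg hL v ψ
        have q5 := mul_le_mul_of_nonneg_right q2.1 q4
        have q6 := mul_le_mul_of_nonneg_left q3.1 (W_nonneg δ ψ)
        linarith)
  rw [integral_neg, key] at h3
  simp only [integral_zero] at h3
  have m1 : ∫ ψ in Ioi x, W δ ψ * B L v v ψ ≤ NW L δ v :=
    setIntegral_mono_set iv0 (Eventually.of_forall fun ψ =>
      mul_nonneg (W_nonneg δ ψ) (B_nonneg hL v ψ)) (LE.le.eventuallyLE sub)
  have m2 : ∫ ψ in Ioi x, W δ ψ * B L (dp v) (dp v) ψ ≤ NW L δ (dp v) :=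
    setIntegral_mono_set iv0' (Eventually.of_forall fun ψ =>
      mul_nonneg (W_nonneg δ ψ) (B_nonneg hL (dp v) ψ)) (LE.le.eventuallyLE sub)
  have m3 := mul_le_mul_of_nonneg_left m1 (by positivity : 0 ≤ 100 * δ + 1)
  have : B L v v x = J L (fun s ψ => v s ψ * v s ψ) x := rfl
  rw [this]
  linarith

end BQ

/-! ### Part 3: the base energy estimate -/

namespace BQ

/-- final algebra of the base estimate -/
lemma close_alg {a0 a1 P κ M A E C D T Φ Z b0 b1 : ℝ} (ha0 : 0 < a0) (hP : 0 ≤ P)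
    (hM : M = 2 * a1 ^ 2 + 6 + (a1 ^ 2 + 1) * P * (2 * a1 ^ 2)) (hκ : κ = a0 / (4 * M))
    (hC : 0 ≤ C) (hD : 0 ≤ D)
    (e1 : a0 * D ≤ κ * T + 1 / (4 * κ) * b1 + (κ * E + (κ * C + (a0 / 4 * D + 1 / a0 * Φ))))
    (e2 : a0 * C ≤ κ * T + 1 / (4 * κ) * (a1 ^ 2 * b0)
      + (κ * (a1 ^ 2 * A + C) + κ * A + 1 / (4 * κ) * Φ))
    (e3 : T ≤ 2 * C + D) (e4 : A ≤ P * E + Z) (e5 : E ≤ 2 * a1 ^ 2 * D + 2 * Φ) :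
    a0 / 2 * (C + D) ≤ (1 / a0 + 1 / (4 * κ) + 2 * κ + 2 * κ * (a1 ^ 2 + 1) * P) * Φ
      + κ * (a1 ^ 2 + 1) * Z + 1 / (4 * κ) * b1 + 1 / (4 * κ) * a1 ^ 2 * b0 := by
  have hMpos : 0 < M := by rw [hM]; positivity
  have hκ0 : 0 < κ := by rw [hκ]; positivity
  have hκM : κ * M = a0 / 4 := by rw [hκ]; field_simp
  have f1 := mul_le_mul_of_nonneg_left e3 hκ0.le
  have f2 := mul_le_mul_of_nonneg_left e5 hκ0.le
  have f3 := mul_le_mul_of_nonneg_left e4 (by positivity : 0 ≤ κ * (a1 ^ 2 + 1))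
  have f4 := mul_le_mul_of_nonneg_left e5 (by positivity : 0 ≤ κ * (a1 ^ 2 + 1) * P)
  have g1 : 0 ≤ κ * C := by positivity
  have g2 : 0 ≤ κ * D := by positivity
  have g3 : 0 ≤ κ * a1 ^ 2 * C := by positivity
  have g4 : 0 ≤ κ * (a1 ^ 2 + 1) * P * (2 * a1 ^ 2) * C := by positivity
  have g5 : 0 ≤ a0 * C := by positivity
  have hκM2 : κ * M * (C + D) = a0 / 4 * (C + D) := by rw [hκM]
  rw [hM] at hκM2
  linarith

/-- **Base energy estimate.** -/
lemma base_est {L : ℝ} (hL : 0 < L) {a0 a1 P : ℝ} (ha0 : 0 < a0) (hP : 0 ≤ P) :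
    ∃ K : ℝ, 0 < K ∧ ∀ a : ℝ → ℝ, ContDiff ℝ (⊤ : ℕ∞) a → (∀ s, a0 ≤ a s) → (∀ s, a s ≤ a1) →
      ∀ h F : ℝ → ℝ → ℝ, Smooth2 h → PeriodicS L h → Smooth2 F →
      (∀ s ψ, ds h s ψ = a s * dp (dp h) s ψ + F s ψ) →
      Fin50 L h → Fin50 L (ds h) → Fin50 L (dp h) → Fin50 L (dp (dp h)) → Fin50 L F →
      ∀ (z : ℝ → ℝ) (Z : ℝ), IntegrableOn (fun ψ => (1 + ψ) ^ 100 * z ψ) (Ioi 0) →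
      (∀ ψ, 0 ≤ z ψ) →
      ∫ ψ in Ioi (0:ℝ), (1 + ψ) ^ 100 * z ψ ≤ Z → 
      (∀ ψ, 0 < ψ → B L h h ψ ≤ P * B L (ds h) (ds h) ψ + z ψ) →
      N L h + N L (ds h) + N L (dp h) + N L (dp (dp h))
        ≤ K * (N L F + Z + B L h h 0 + B L (ds h) (ds h) 0) := by
  obtain ⟨M, hM⟩ : ∃ M, M = 2 * a1 ^ 2 + 6 + (a1 ^ 2 + 1) * P * (2 * a1 ^ 2) := ⟨_, rfl⟩
  obtain ⟨κ, hκ⟩ : ∃ κ, κ = a0 / (4 * M) := ⟨_, rfl⟩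
  have hMpos : 0 < M := by rw [hM]; positivity
  have hκ0 : 0 < κ := by rw [hκ]; positivity
  obtain ⟨δ, hδ⟩ : ∃ δ, δ = min (1/100) (κ / 100) := ⟨_, rfl⟩
  have d0 : 0 < δ := by rw [hδ]; exact lt_min (by norm_num) (by positivity)
  have d1 : δ ≤ 1/100 := by rw [hδ]; exact min_le_left _ _
  have d2 : δ ≤ κ / 100 := by rw [hδ]; exact min_le_right _ _
  have d1' : δ ≤ 1 := by linarith
  obtain ⟨K1, hK1⟩ : ∃ K1, K1 = (1 / a0 + 1 / (4 * κ) + 2 * κ + 2 * κ * (a1 ^ 2 + 1) * P)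
      + κ * (a1 ^ 2 + 1) + 1 / (4 * κ) + 1 / (4 * κ) * a1 ^ 2 := ⟨_, rfl⟩
  have hK1pos : 0 < K1 := by rw [hK1]; positivity
  obtain ⟨K2, hK2⟩ : ∃ K2, K2 = 2 / a0 * K1 := ⟨_, rfl⟩
  have hK2pos : 0 < K2 := by rw [hK2]; positivity
  obtain ⟨K3, hK3⟩ : ∃ K3, K3 = (P + 1) * (2 * a1 ^ 2 * K2 + 2) + 1 + K2 := ⟨_, rfl⟩
  have hK3pos : 0 < K3 := by rw [hK3]; positivity
  refine ⟨(δ ^ 100)⁻¹ * K3, by positivity, ?_⟩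
  intro a ha haL haU h F sh ph sF eqn fh fs fp fpp fF z Z zi z0 zZ hz
  have hab : ∀ s, |a s| ≤ a1 := fun s => by
    rw [abs_of_nonneg (ha0.le.trans (haL s))]; exact haU s
  have hac := ha.continuous
  have ss := sm_ds sh
  have sp := sm_dp sh
  have spp := sm_dp sp
  have sa := sm_fst ha
  have sah := sm_mul sa sh
  have sap := sm_mul sa sp
  have sapp := sm_mul sa spp
  have fah : Fin50 L (fun s ψ => a s * h s ψ) :=
    (fin_of_le hL (c := a1 ^ 2) (c' := 0) sah
      (fun ψ _ => by linarith [B_coef hL ha hab sh ψ]) fh fh).1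
  have fap : Fin50 L (fun s ψ => a s * dp h s ψ) :=
    (fin_of_le hL (c := a1 ^ 2) (c' := 0) sap
      (fun ψ _ => by linarith [B_coef hL ha hab sp ψ]) fp fp).1
  have ih := W_int hL d0.le d1' sh sh fh fh
  have is := W_int hL d0.le d1' ss ss fs fs
  have ip := W_int hL d0.le d1' sp sp fp fp
  have ipp := W_int hL d0.le d1' spp spp fpp fpp
  have iF := W_int hL d0.le d1' sF sF fF fF
  -- slice identities
  have low : ∀ (v : ℝ → ℝ → ℝ), Smooth2 v → ∀ ψ,
      a0 * B L v v ψ ≤ B L (fun s ψ => a s * v s ψ) v ψ := by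
    intro v sv ψ
    have := sm_cont_s sv ψ
    unfold B
    rw [← J_smul]
    refine J_mono hL (by fun_prop) (by fun_prop) fun s => ?_
    have := mul_le_mul_of_nonneg_right (haL s) (mul_self_nonneg (v s ψ))
    linarith
  have id1 : ∀ v : ℝ → ℝ → ℝ, Smooth2 v → ∀ ψ,
      B L (ds h) v ψ = B L (fun s ψ => a s * dp (dp h) s ψ) v ψ + B L F v ψ := by
    intro v sv ψ
    unfold B
    rw [← J_add L (sm_mul sapp sv) (sm_mul sF sv)]
    congr 1; funext s ψ; rw [eqn]; ring
  -- T
  have eT := sup_psi hL d0.le d1' sp fp fpp (le_refl (0:ℝ))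
  rw [W_zero, one_mul] at eT
  have nC := NW_nonneg hL δ (dp h)
  have nD := NW_nonneg hL δ (dp (dp h))
  have e3 : B L (dp h) (dp h) 0 ≤ 2 * NW L δ (dp h) + NW L δ (dp (dp h)) := by
    have : (100 * δ + 1) * NW L δ (dp h) ≤ 2 * NW L δ (dp h) :=
      mul_le_mul_of_nonneg_right (by linarith) nC
    linarith
  -- E
  have e5 : NW L δ (ds h) ≤ 2 * a1 ^ 2 * NW L δ (dp (dp h)) + 2 * NW L δ F := by
    have := int_lin (G := fun _ => 0) (c1 := 2 * a1 ^ 2) (c2 := 2) (c3 := 0) is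
      integrableOn_zero ipp iF iF (by
      intro ψ hψ
      have q1 := B_add_le hL sapp sF ψ
      have q2 := B_coef hL ha hab spp ψ
      have q3 : B L (ds h) (ds h) ψ = B L (fun s ψ => a s * dp (dp h) s ψ + F s ψ)
          (fun s ψ => a s * dp (dp h) s ψ + F s ψ) ψ := by
        unfold B; congr 1; funext s ψ; rw [eqn]
      have q4 : B L (ds h) (ds h) ψ ≤ 2 * a1 ^ 2 * B L (dp (dp h)) (dp (dp h)) ψ
          + 2 * B L F F ψ := by linarith
      have q5 := mul_le_mul_of_nonneg_left q4 (W_nonneg δ ψ)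
      linarith)
    simp only [integral_zero] at this
    unfold NW
    linarith
  -- A
  have e4 : NW L δ h ≤ P * NW L δ (ds h) + Z := by
    have := int_lin (G := fun _ => 0) (c1 := P) (c2 := 1) (c3 := 0) ih
      integrableOn_zero is zi zi (by
      intro ψ hψ
      have q5 := mul_le_mul_of_nonneg_left (hz ψ hψ) (W_nonneg δ ψ)
      have q6 := mul_le_mul_of_nonneg_right (W_le d0.le d1' hψ) (z0 ψ)
      linarith)
    simp only [integral_zero] at this
    unfold NW
    linarith
  -- (1)
  have e1 : a0 * NW L δ (dp (dp h)) ≤ κ * B L (dp h) (dp h) 0 + 1 / (4 * κ) * B L (ds h) (ds h) 0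
      + (κ * NW L δ (ds h) + (κ * NW L δ (dp h)
        + (a0 / 4 * NW L δ (dp (dp h)) + 1 / a0 * NW L δ F))) := by
    have sl : ∀ ψ, W' δ ψ * J L (fun s ψ => ds h s ψ * dp h s ψ) ψ
        + W δ ψ * J L (dp (fun s ψ => ds h s ψ * dp h s ψ)) ψ
        = W' δ ψ * B L (ds h) (dp h) ψ + W δ ψ * B L (ds h) (dp (dp h)) ψ := by
      intro ψ
      rw [J_dp_mul L ss sp, ← ds_dp sh, B_ds_self L sp (per_dp ph), zero_add]
      rfl
    have i2 : IntegrableOn (fun ψ => W' δ ψ * J L (fun s ψ => ds h s ψ * dp h s ψ) ψ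
        + W δ ψ * J L (dp (fun s ψ => ds h s ψ * dp h s ψ)) ψ) (Ioi 0) := by
      simp only [sl]
      exact (W'_int hL d0.le d1' ss sp fs fp).add (W_int hL d0.le d1' ss spp fs fpp)
    have key := ibp (L := L) 0 (W_deriv δ) (sm_mul ss sp) (W_int hL d0.le d1' ss sp fs fp) i2
    have idd : IntegrableOn (fun ψ => a0 * (W δ ψ * B L (dp (dp h)) (dp (dp h)) ψ)
        - κ * (W δ ψ * B L (ds h) (ds h) ψ)) (Ioi 0) :=
      (ipp.const_mul a0).sub (is.const_mul κ)
    have := int_lin (c1 := κ) (c2 := a0 / 4) (c3 := 1 / a0) idd i2 ip ipp iF (by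
      intro ψ hψ
      rw [sl ψ]
      have q1 := low _ spp ψ
      have q2 := id1 _ spp ψ
      have q3 := abs_le.1 (B_young hL sF spp (c := 1 / a0) (by positivity) ψ)
      have q3' : 1 / (4 * (1 / a0)) = a0 / 4 := by field_simp
      rw [q3'] at q3
      have q4 := B_young hL ss sp (c := 1/2) (by norm_num) ψ
      have q4' : |B L (ds h) (dp h) ψ| ≤ B L (ds h) (ds h) ψ + B L (dp h) (dp h) ψ := by
        norm_num at q4
        linarith [B_nonneg hL (ds h) ψ, B_nonneg hL (dp h) ψ]
      have q5 : |W' δ ψ| ≤ κ * W δ ψ := (W'_le d0.le hψ).trans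
        (mul_le_mul_of_nonneg_right (by linarith) (W_nonneg δ ψ))
      have q6 : |W' δ ψ * B L (ds h) (dp h) ψ|
          ≤ (κ * W δ ψ) * (B L (ds h) (ds h) ψ + B L (dp h) (dp h) ψ) := by
        rw [abs_mul]
        exact mul_le_mul q5 q4' (abs_nonneg _) ((abs_nonneg _).trans q5)
      have q7 := (abs_le.1 q6).1
      have q8 : a0 * B L (dp (dp h)) (dp (dp h)) ψ ≤ B L (ds h) (dp (dp h)) ψ
          + (1 / a0 * B L F F ψ + a0 / 4 * B L (dp (dp h)) (dp (dp h)) ψ) := by linarith [q3.1]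
      have q9 := mul_le_mul_of_nonneg_left q8 (W_nonneg δ ψ)
      linarith)
    rw [key, W_zero, one_mul, integral_sub (ipp.const_mul a0) (is.const_mul κ),
      integral_const_mul, integral_const_mul] at this
    have bd := (abs_le.1 (B_young hL sp ss hκ0 0)).1
    rw [B_comm L (dp h) (ds h)] at bd
    unfold NW
    unfold B at bd this ⊢
    linarith
  -- (2)
  have e2 : a0 * NW L δ (dp h) ≤ κ * B L (dp h) (dp h) 0 + 1 / (4 * κ) * (a1 ^ 2 * B L h h 0)
      + (κ * (a1 ^ 2 * NW L δ h + NW L δ (dp h)) + κ * NW L δ h + 1 / (4 * κ) * NW L δ F) := by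
    have dpa : dp (fun s ψ => a s * h s ψ) = fun s ψ => a s * dp h s ψ := by
      funext s ψ; exact ((has_p sh s ψ).const_mul (a s)).deriv
    have sl : ∀ ψ, W' δ ψ * J L (fun s ψ => (a s * h s ψ) * dp h s ψ) ψ
        + W δ ψ * J L (dp (fun s ψ => (a s * h s ψ) * dp h s ψ)) ψ
        = W' δ ψ * B L (fun s ψ => a s * h s ψ) (dp h) ψ
          + W δ ψ * (B L (fun s ψ => a s * dp h s ψ) (dp h) ψ
          + B L (fun s ψ => a s * h s ψ) (dp (dp h)) ψ) := by
      intro ψ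
      rw [J_dp_mul L sah sp, dpa]
      rfl
    have i2 : IntegrableOn (fun ψ => W' δ ψ * J L (fun s ψ => (a s * h s ψ) * dp h s ψ) ψ
        + W δ ψ * J L (dp (fun s ψ => (a s * h s ψ) * dp h s ψ)) ψ) (Ioi 0) := by
      simp only [sl, mul_add]
      exact (W'_int hL d0.le d1' sah sp fah fp).add
        ((W_int hL d0.le d1' sap sp fap fp).add (W_int hL d0.le d1' sah spp fah fpp))
    have key := ibp (L := L) 0 (W_deriv δ) (sm_mul sah sp) (W_int hL d0.le d1' sah sp fah fp) i2
    have := int_lin (c1 := κ * a1 ^ 2 + κ) (c2 := κ) (c3 := 1 / (4 * κ)) (ip.const_mul a0) i2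
      ih ip iF (by
      intro ψ hψ
      rw [sl ψ]
      have q1 := low _ sp ψ
      have q2 := id1 _ sh ψ
      rw [B_ds_self L sh ph] at q2
      have q2' : B L (fun s ψ => a s * dp (dp h) s ψ) h ψ
          = B L (fun s ψ => a s * h s ψ) (dp (dp h)) ψ := by
        unfold B; congr 1; funext s ψ; ring
      rw [q2', B_comm L F h] at q2
      have q3 := abs_le.1 (B_young hL sh sF hκ0 ψ)
      have q4 := B_young hL sah sp (c := 1/2) (by norm_num) ψ
      have q4' : |B L (fun s ψ => a s * h s ψ) (dp h) ψ|
          ≤ a1 ^ 2 * B L h h ψ + B L (dp h) (dp h) ψ := by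
        norm_num at q4
        linarith [B_nonneg hL (dp h) ψ, B_coef hL ha hab sh ψ,
          B_nonneg hL (fun s ψ => a s * h s ψ) ψ]
      have q5 : |W' δ ψ| ≤ κ * W δ ψ := (W'_le d0.le hψ).trans
        (mul_le_mul_of_nonneg_right (by linarith) (W_nonneg δ ψ))
      have q6 : |W' δ ψ * B L (fun s ψ => a s * h s ψ) (dp h) ψ|
          ≤ (κ * W δ ψ) * (a1 ^ 2 * B L h h ψ + B L (dp h) (dp h) ψ) := by
        rw [abs_mul]
        exact mul_le_mul q5 q4' (abs_nonneg _) ((abs_nonneg _).trans q5)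
      have q7 := (abs_le.1 q6).1
      have q8 : a0 * B L (dp h) (dp h) ψ ≤ (B L (fun s ψ => a s * dp h s ψ) (dp h) ψ
          + B L (fun s ψ => a s * h s ψ) (dp (dp h)) ψ)
          + (κ * B L h h ψ + 1 / (4 * κ) * B L F F ψ) := by linarith [q3.2]
      have q9 := mul_le_mul_of_nonneg_left q8 (W_nonneg δ ψ)
      linarith)
    rw [key, W_zero, one_mul, integral_const_mul] at this
    have bd := (abs_le.1 (B_young hL sp sah hκ0 0)).1
    rw [B_comm L (dp h) (fun s ψ => a s * h s ψ)] at bd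
    have bd2 := mul_le_mul_of_nonneg_left (B_coef hL ha hab sh 0)
      (by positivity : 0 ≤ 1 / (4 * κ))
    unfold NW
    unfold B at bd bd2 this ⊢
    linarith
  have fin := close_alg ha0 hP hM hκ nC nD e1 e2 e3 e4 e5
  -- conclusion
  have nΦ := NW_nonneg hL δ F
  have nA := NW_nonneg hL δ h
  have nb0 := B_nonneg hL h 0
  have nb1 := B_nonneg hL (ds h) 0
  have nZ : 0 ≤ Z := le_trans (setIntegral_nonneg measurableSet_Ioi fun ψ hψ => by
    have hψ' : (0:ℝ) < ψ := hψ
    exact mul_nonneg (by positivity) (z0 ψ)) zZ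
  obtain ⟨R, hR⟩ : ∃ R, R = NW L δ F + Z + B L h h 0 + B L (ds h) (ds h) 0 := ⟨_, rfl⟩
  have hS1 : a0 / 2 * (NW L δ (dp h) + NW L δ (dp (dp h))) ≤ K1 * R := by
    refine fin.trans ?_
    obtain ⟨k1, hk1⟩ : ∃ k1, k1 = 1 / a0 + 1 / (4 * κ) + 2 * κ + 2 * κ * (a1 ^ 2 + 1) * P :=
      ⟨_, rfl⟩
    obtain ⟨k2, hk2⟩ : ∃ k2, k2 = κ * (a1 ^ 2 + 1) := ⟨_, rfl⟩
    obtain ⟨k3, hk3⟩ : ∃ k3, k3 = 1 / (4 * κ) := ⟨_, rfl⟩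
    obtain ⟨k4, hk4⟩ : ∃ k4, k4 = 1 / (4 * κ) * a1 ^ 2 := ⟨_, rfl⟩
    have p1 : 0 ≤ k1 := by rw [hk1]; positivity
    have p2 : 0 ≤ k2 := by rw [hk2]; positivity
    have p3 : 0 ≤ k3 := by rw [hk3]; positivity
    have p4 : 0 ≤ k4 := by rw [hk4]; positivity
    rw [hK1, ← hk1, ← hk2, ← hk4, ← hk3, hR]
    have := mul_nonneg p1 nZ
    have := mul_nonneg p1 nb0
    have := mul_nonneg p1 nb1
    have := mul_nonneg p2 nΦ
    have := mul_nonneg p2 nb0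
    have := mul_nonneg p2 nb1
    have := mul_nonneg p3 nΦ
    have := mul_nonneg p3 nZ
    have := mul_nonneg p3 nb0
    have := mul_nonneg p4 nΦ
    have := mul_nonneg p4 nZ
    have := mul_nonneg p4 nb1
    linarith
  have hS : NW L δ (dp h) + NW L δ (dp (dp h)) ≤ K2 * R := by
    have := mul_le_mul_of_nonneg_left hS1 (by positivity : 0 ≤ 2 / a0)
    have e : 2 / a0 * (a0 / 2 * (NW L δ (dp h) + NW L δ (dp (dp h))))
        = NW L δ (dp h) + NW L δ (dp (dp h)) := by field_simp
    rw [e] at this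
    rw [hK2]; linarith
  have hR0 : 0 ≤ R := by rw [hR]; positivity
  have hRΦ : NW L δ F ≤ R := by rw [hR]; linarith
  have hRZ : Z ≤ R := by rw [hR]; linarith
  have hE : NW L δ (ds h) ≤ (2 * a1 ^ 2 * K2 + 2) * R := by
    have : 2 * a1 ^ 2 * NW L δ (dp (dp h)) ≤ 2 * a1 ^ 2 * (K2 * R) :=
      mul_le_mul_of_nonneg_left (by linarith) (by positivity)
    linarith
  have hall : NW L δ h + NW L δ (ds h) + NW L δ (dp h) + NW L δ (dp (dp h)) ≤ K3 * R := by
    have := mul_le_mul_of_nonneg_left hE (by linarith : 0 ≤ P + 1)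
    rw [hK3]
    linarith
  have g1 := NW_ge hL d0.le d1' sh fh
  have g2 := NW_ge hL d0.le d1' ss fs
  have g3 := NW_ge hL d0.le d1' sp fp
  have g4 := NW_ge hL d0.le d1' spp fpp
  have g5 := NW_le hL d0.le d1' sF fF
  have hR' : R ≤ N L F + Z + B L h h 0 + B L (ds h) (ds h) 0 := by rw [hR]; linarith
  have hRR := mul_le_mul_of_nonneg_left hR' hK3pos.le
  rw [mul_assoc, ← div_eq_inv_mul, le_div_iff₀ (by positivity)]
  linarith

end BQ

/-! ### Part 4: Poincare and Sobolev inequalities in `s` -/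

namespace BQ

lemma sob_w {L : ℝ} (hL : 0 < L) {v : ℝ → ℝ → ℝ} (hv : Smooth2 v) {a : ℝ → ℝ} (ha : Continuous a)
    (ha0 : ∀ s, 0 ≤ a s) {m : ℝ} (hm : 0 < m) (hma : m = ∫ s in (0:ℝ)..L, a s) (ψ : ℝ) {s : ℝ}
    (hs : s ∈ Icc (0:ℝ) L) :
    (v s ψ) ^ 2 ≤ 2 * L * B L (ds v) (ds v) ψ
      + 2 / m ^ 2 * (J L (fun s ψ => a s * v s ψ) ψ) ^ 2 := by
  have c1 := sm_cont_s (sm_ds hv) ψ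
  have c0 := sm_cont_s hv ψ
  obtain ⟨M, hM⟩ : ∃ M, M = ∫ t in (0:ℝ)..L, |ds v t ψ| := ⟨_, rfl⟩
  have hM2 : M ^ 2 ≤ L * B L (ds v) (ds v) ψ := by
    have h0 : 0 ≤ ∫ t in (0:ℝ)..L, (|ds v t ψ| - M / L) ^ 2 :=
      intervalIntegral.integral_nonneg hL.le (fun _ _ => sq_nonneg _)
    have e : (fun t => (|ds v t ψ| - M / L) ^ 2)
        = fun t => (ds v t ψ * ds v t ψ - (2 * M / L) * |ds v t ψ|) + (M / L) ^ 2 := by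
      funext t
      have := abs_mul_abs_self (ds v t ψ)
      linear_combination this
    rw [e, intervalIntegral.integral_add
        (Continuous.intervalIntegrable (by fun_prop) _ _)
        (Continuous.intervalIntegrable (by fun_prop) _ _),
      intervalIntegral.integral_sub (Continuous.intervalIntegrable (by fun_prop) _ _)
        (Continuous.intervalIntegrable (by fun_prop) _ _),
      intervalIntegral.integral_const_mul, ← hM, intervalIntegral.integral_const] at h0
    have h1 : 0 ≤ B L (ds v) (ds v) ψ - 2 * M / L * M + (L - 0) * (M / L) ^ 2 := h0
    have h2 := mul_nonneg hL.le h1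
    have h3 : L * (B L (ds v) (ds v) ψ - 2 * M / L * M + (L - 0) * (M / L) ^ 2)
        = L * B L (ds v) (ds v) ψ - M ^ 2 := by field_simp; ring
    linarith
  have osc : ∀ t ∈ Icc (0:ℝ) L, |v s ψ - v t ψ| ≤ M := by
    intro t ht
    rw [← intervalIntegral.integral_eq_sub_of_hasDerivAt (fun x _ => has_s hv x ψ)
      (c1.intervalIntegrable _ _), hM]
    have nn : |∫ x in t..s, ds v x ψ| ≤ abs (∫ x in t..s, abs (ds v x ψ)) := by
      have := intervalIntegral.norm_integral_le_abs_integral_norm (f := fun x => ds v x ψ)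
        (a := t) (b := s) (μ := volume)
      simpa only [Real.norm_eq_abs] using this
    refine nn.trans ?_
    rw [intervalIntegral.integral_of_le hL.le]
    rw [intervalIntegral.abs_integral_eq_abs_integral_uIoc,
      abs_of_nonneg (setIntegral_nonneg measurableSet_uIoc fun _ _ => abs_nonneg _)]
    refine setIntegral_mono_set ?_ ?_ ?_
    · exact (c1.abs.integrableOn_Ioc)
    · exact Eventually.of_forall fun _ => abs_nonneg _
    · refine (Eventually.of_forall fun x hx => ?_)
      have hx' : x ∈ uIoc t s := hx
      rw [mem_uIoc] at hx'
      change x ∈ Ioc 0 L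
      rcases hx' with h | h
      · exact ⟨lt_of_le_of_lt ht.1 h.1, h.2.trans hs.2⟩
      · exact ⟨lt_of_le_of_lt hs.1 h.1, h.2.trans ht.2⟩
  have hM0 : 0 ≤ M := (abs_nonneg _).trans (osc s hs)
  have key : |v s ψ * m - J L (fun s ψ => a s * v s ψ) ψ| ≤ M * m := by
    have e : v s ψ * m - J L (fun s ψ => a s * v s ψ) ψ
        = ∫ t in (0:ℝ)..L, a t * (v s ψ - v t ψ) := by
      unfold J
      rw [hma, ← intervalIntegral.integral_const_mul, ← intervalIntegral.integral_sub
        (Continuous.intervalIntegrable (by fun_prop) _ _)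
        (Continuous.intervalIntegrable (by fun_prop) _ _)]
      congr 1; funext t; ring
    rw [e, hma, ← intervalIntegral.integral_const_mul]
    refine (intervalIntegral.abs_integral_le_integral_abs hL.le).trans ?_
    refine intervalIntegral.integral_mono_on hL.le (Continuous.intervalIntegrable (by fun_prop) _ _)
      (Continuous.intervalIntegrable (by fun_prop) _ _) fun t ht => ?_
    rw [abs_mul, abs_of_nonneg (ha0 t), mul_comm]
    exact mul_le_mul_of_nonneg_right (osc t ht) (ha0 t)
  obtain ⟨A, hA⟩ : ∃ A, A = J L (fun s ψ => a s * v s ψ) ψ := ⟨_, rfl⟩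
  rw [← hA] at key ⊢
  have k2 : |v s ψ - A / m| ≤ M := by
    have : v s ψ * m - A = (v s ψ - A / m) * m := by field_simp
    rw [this, abs_mul, abs_of_pos hm] at key
    exact le_of_mul_le_mul_right key hm
  have k3 : (v s ψ - A / m) ^ 2 ≤ M ^ 2 := sq_le_sq' (by linarith [(abs_le.1 k2).1]) (abs_le.1 k2).2
  have k4 : 2 / m ^ 2 * A ^ 2 = 2 * (A / m) ^ 2 := by field_simp
  rw [k4]
  nlinarith [sq_nonneg (v s ψ - 2 * (A / m))]

/-- weighted Poincare inequality -/
lemma poin_w {L : ℝ} (hL : 0 < L) {v : ℝ → ℝ → ℝ} (hv : Smooth2 v) {a : ℝ → ℝ} (ha : Continuous a)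
    (ha0 : ∀ s, 0 ≤ a s) {m : ℝ} (hm : 0 < m) (hma : m = ∫ s in (0:ℝ)..L, a s) (ψ : ℝ) :
    B L v v ψ ≤ 2 * L ^ 2 * B L (ds v) (ds v) ψ
      + 2 * L / m ^ 2 * (J L (fun s ψ => a s * v s ψ) ψ) ^ 2 := by
  have c0 := sm_cont_s hv ψ
  have : B L v v ψ ≤ ∫ s in (0:ℝ)..L, (2 * L * B L (ds v) (ds v) ψ
      + 2 / m ^ 2 * (J L (fun s ψ => a s * v s ψ) ψ) ^ 2) := by
    refine intervalIntegral.integral_mono_on hL.le (Continuous.intervalIntegrable (by fun_prop) _ _)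
      (Continuous.intervalIntegrable (by fun_prop) _ _) fun t ht => ?_
    have := sob_w hL hv ha ha0 hm hma ψ ht
    rw [← sq]; exact this
  rw [intervalIntegral.integral_const, smul_eq_mul] at this
  refine this.trans (le_of_eq ?_)
  field_simp; ring

/-- Poincare for functions of mean zero -/
lemma poin_zero {L : ℝ} (hL : 0 < L) {v : ℝ → ℝ → ℝ} (hv : Smooth2 v) (ψ : ℝ)
    (h0 : J L v ψ = 0) : B L v v ψ ≤ 2 * L ^ 2 * B L (ds v) (ds v) ψ := by
  have := poin_w hL hv (a := fun _ => 1) continuous_const (fun _ => zero_le_one) hL (by simp) ψ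
  simp only [one_mul] at this
  have e : J L (fun s ψ => v s ψ) ψ = 0 := h0
  rw [e] at this
  linarith

/-- Cauchy-Schwarz against a bounded coefficient -/
lemma J_coef_sq {L : ℝ} (hL : 0 < L) {v : ℝ → ℝ → ℝ} (hv : Smooth2 v) {a : ℝ → ℝ}
    (ha : ContDiff ℝ (⊤ : ℕ∞) a) {a1 : ℝ} (hab : ∀ s, |a s| ≤ a1) (ψ : ℝ) :
    (J L (fun s ψ => a s * v s ψ) ψ) ^ 2 ≤ L * a1 ^ 2 * B L v v ψ := by
  have h1 := B_cs hL (sm_fst ha) hv ψ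
  have h2 : B L (fun s _ => a s) (fun s _ => a s) ψ ≤ L * a1 ^ 2 := by
    have hc := ha.continuous
    have : B L (fun s _ => a s) (fun s _ => a s) ψ ≤ ∫ s in (0:ℝ)..L, a1 ^ 2 := by
      refine intervalIntegral.integral_mono_on hL.le
        (Continuous.intervalIntegrable (by fun_prop) _ _)
        (Continuous.intervalIntegrable (by fun_prop) _ _) fun t ht => ?_
      rw [← sq]
      exact sq_le_sq' (by linarith [(abs_le.1 (hab t)).1]) (abs_le.1 (hab t)).2
    rw [intervalIntegral.integral_const, smul_eq_mul] at this
    linarith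
  exact h1.trans (mul_le_mul_of_nonneg_right h2 (B_nonneg hL v ψ))

/-- pointwise bound from slice norms -/
lemma sob {L : ℝ} (hL : 0 < L) {v : ℝ → ℝ → ℝ} (hv : Smooth2 v) (hp : PeriodicS L v) (s ψ : ℝ) :
    (v s ψ) ^ 2 ≤ 2 * L * B L (ds v) (ds v) ψ + 2 / L * B L v v ψ := by
  obtain ⟨t, ht, e⟩ := (hp ψ).exists_mem_Ico₀ hL s
  have e' : v s ψ = v t ψ := e
  rw [e']
  have h1 := sob_w hL hv (a := fun _ => 1) continuous_const (fun _ => zero_le_one) hL (by simp) ψ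
    ⟨ht.1, ht.2.le⟩
  have h2 := J_coef_sq hL hv (a := fun _ => 1) contDiff_const (a1 := 1) (by simp) ψ
  have h3 := mul_le_mul_of_nonneg_left h2 (by positivity : 0 ≤ 2 / L ^ 2)
  have h4 : 2 / L ^ 2 * (L * 1 ^ 2 * B L v v ψ) = 2 / L * B L v v ψ := by field_simp
  linarith

end BQ

/-! ### Part 5: decay of the zero mode -/

namespace BQ

lemma anti_nonneg {w w' : ℝ → ℝ} (hw : ∀ ψ, 0 < ψ → HasDerivAt w (w' ψ) ψ)
    (h : ∀ ψ, 0 < ψ → w' ψ ≤ 0) (lw : Tendsto w atTop (nhds 0)) {ψ : ℝ} (hψ : 0 < ψ) :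
    0 ≤ w ψ := by
  have anti : AntitoneOn w (Ioi 0) := by
    refine antitoneOn_of_deriv_nonpos (convex_Ioi 0)
      (fun x hx => (hw x hx).continuousAt.continuousWithinAt) ?_ ?_
    · intro x hx
      rw [interior_Ioi] at hx
      exact (hw x hx).differentiableAt.differentiableWithinAt
    · intro x hx
      rw [interior_Ioi] at hx
      rw [(hw x hx).deriv]; exact h x hx
  refine le_of_tendsto lw ?_
  filter_upwards [eventually_ge_atTop ψ] with x hx
  exact anti hψ (lt_of_lt_of_le hψ hx) hx

lemma inv_pow_tendsto {n : ℕ} (hn : n ≠ 0) (K : ℝ) :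
    Tendsto (fun ψ : ℝ => K / (1 + ψ) ^ n) atTop (nhds 0) := by
  refine Tendsto.div_atTop tendsto_const_nhds ?_
  exact (tendsto_pow_atTop hn).comp (tendsto_atTop_add_const_left _ _ tendsto_id)

lemma decay_pow {v v' : ℝ → ℝ} {n : ℕ} (hn : n ≠ 0) {K : ℝ} (hK : 0 ≤ K)
    (hv : ∀ ψ, 0 < ψ → HasDerivAt v (v' ψ) ψ)
    (h : ∀ ψ, 0 < ψ → |v' ψ| ≤ K / (1 + ψ) ^ (n + 1)) (lv : Tendsto v atTop (nhds 0)) {ψ : ℝ}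
    (hψ : 0 < ψ) : |v ψ| ≤ K / (1 + ψ) ^ n := by
  have hφ : ∀ ψ : ℝ, 0 < ψ → HasDerivAt (fun ψ : ℝ => K / (1 + ψ) ^ n)
      (- (n * K / (1 + ψ) ^ (n + 1))) ψ := by
    intro x hx
    have h1 : HasDerivAt (fun ψ : ℝ => 1 + ψ) 1 x := (hasDerivAt_id x).const_add 1
    have h2 := (hasDerivAt_const x K).fun_div (h1.fun_pow n) (by positivity)
    refine h2.congr_deriv ?_
    obtain ⟨k, rfl⟩ := Nat.exists_eq_succ_of_ne_zero hn
    have : (0:ℝ) < 1 + x := by linarith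
    field_simp
    simp
    ring
  have lφ := inv_pow_tendsto hn K
  have hn1 : (1:ℝ) ≤ n := by exact_mod_cast Nat.one_le_iff_ne_zero.2 hn
  have h' : ∀ ψ, 0 < ψ → |v' ψ| ≤ n * K / (1 + ψ) ^ (n + 1) := fun x hx =>
    (h x hx).trans (by gcongr; nlinarith)
  have p1 := anti_nonneg (fun x hx => (hφ x hx).fun_sub (hv x hx))
    (fun x hx => by linarith [(abs_le.1 (h' x hx)).1]) (by simpa using lφ.sub lv) hψ
  have p2 := anti_nonneg (fun x hx => (hφ x hx).fun_add (hv x hx))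
    (fun x hx => by linarith [(abs_le.1 (h' x hx)).2]) (by simpa using lφ.add lv) hψ
  rw [abs_le]; constructor <;> linarith

lemma J_tendsto {L : ℝ} (hL : 0 < L) {v : ℝ → ℝ → ℝ} (hv : Smooth2 v) {a : ℝ → ℝ}
    (ha : ContDiff ℝ (⊤ : ℕ∞) a) {a1 : ℝ} (hab : ∀ s, |a s| ≤ a1)
    (fv : Fin50 L v) (fv' : Fin50 L (dp v)) :
    Tendsto (J L (fun s ψ => a s * v s ψ)) atTop (nhds 0) := by
  obtain ⟨C, hC⟩ : ∃ C, C = L * a1 ^ 2 * ((100 * 1 + 1) * NW L 1 v + NW L 1 (dp v)) := ⟨_, rfl⟩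
  have hsq : Tendsto (fun ψ => (J L (fun s ψ => a s * v s ψ) ψ) ^ 2) atTop (nhds 0) := by
    refine squeeze_zero' (Eventually.of_forall fun _ => sq_nonneg _) ?_
      (inv_pow_tendsto (n := 100) (by norm_num) C)
    filter_upwards [eventually_ge_atTop (0:ℝ)] with x hx
    refine (J_coef_sq hL hv ha hab x).trans ?_
    have h1 := sup_psi hL zero_le_one le_rfl hv fv fv' hx
    have hpos : (0:ℝ) < (1 + x) ^ 100 := by positivity
    rw [le_div_iff₀ hpos, hC, mul_assoc]
    refine mul_le_mul_of_nonneg_left ?_ (by positivity)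
    unfold W at h1
    rw [one_mul] at h1
    linarith
  have := hsq.sqrt
  simp only [Real.sqrt_sq_eq_abs, Real.sqrt_zero] at this
  exact (tendsto_zero_iff_abs_tendsto_zero _).2 this

lemma zero_mode {L : ℝ} (hL : 0 < L) {Q : ℝ → ℝ → ℝ} (hQ : Smooth2 Q) {a : ℝ → ℝ}
    (ha : ContDiff ℝ (⊤ : ℕ∞) a) {a1 : ℝ} (hab : ∀ s, |a s| ≤ a1)
    (f0 : Fin50 L Q) (f1 : Fin50 L (dp Q)) (f2 : Fin50 L (dp (dp Q))) {K : ℝ} (hK : 0 ≤ K)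
    (h : ∀ ψ, 0 < ψ → |J L (fun s ψ => a s * dp (dp Q) s ψ) ψ| ≤ K / (1 + ψ) ^ 100) {ψ : ℝ}
    (hψ : 0 < ψ) :
    |J L (fun s ψ => a s * Q s ψ) ψ| ≤ K / (1 + ψ) ^ 98 := by
  have dpa : ∀ u : ℝ → ℝ → ℝ, Smooth2 u →
      dp (fun s ψ => a s * u s ψ) = fun s ψ => a s * dp u s ψ := by
    intro u hu
    funext s ψ; exact ((has_p hu s ψ).const_mul (a s)).deriv
  have d1 : ∀ ψ, HasDerivAt (J L (fun s ψ => a s * Q s ψ)) (J L (fun s ψ => a s * dp Q s ψ) ψ) ψ := by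
    intro x
    have := J_hasDeriv L (sm_mul (sm_fst ha) hQ) x
    rwa [dpa Q hQ] at this
  have d2 : ∀ ψ, HasDerivAt (J L (fun s ψ => a s * dp Q s ψ))
      (J L (fun s ψ => a s * dp (dp Q) s ψ) ψ) ψ := by
    intro x
    have := J_hasDeriv L (sm_mul (sm_fst ha) (sm_dp hQ)) x
    rwa [dpa _ (sm_dp hQ)] at this
  refine decay_pow (by norm_num) hK (fun x _ => d1 x) (fun x hx => ?_)
    (J_tendsto hL hQ ha hab f0 f1) hψ
  exact decay_pow (by norm_num) hK (fun x _ => d2 x) (fun y hy => h y hy)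
    (J_tendsto hL (sm_dp hQ) ha hab f1 f2) hx

lemma inv_sq_int : IntegrableOn (fun ψ : ℝ => 1 / (1 + ψ) ^ 2) (Ioi 0) ∧
    ∫ ψ in Ioi (0:ℝ), 1 / (1 + ψ) ^ 2 = 1 := by
  have hd : ∀ x ∈ Ici (0:ℝ), HasDerivAt (fun ψ : ℝ => - (1 / (1 + ψ) ^ 1)) (1 / (1 + x) ^ 2) x := by
    intro x hx
    have hx0 : (0:ℝ) ≤ x := hx
    have h1 : HasDerivAt (fun ψ : ℝ => 1 + ψ) 1 x := (hasDerivAt_id x).const_add 1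
    have h2 := ((hasDerivAt_const x (1:ℝ)).fun_div (h1.fun_pow 1) (by positivity)).fun_neg
    refine h2.congr_deriv ?_
    simp
    ring
  have hl : Tendsto (fun ψ : ℝ => - (1 / (1 + ψ) ^ 1)) atTop (nhds 0) := by
    simpa using (inv_pow_tendsto (n := 1) (by norm_num) 1).neg
  refine ⟨integrableOn_Ioi_deriv_of_nonneg' hd (fun x _ => by positivity) hl, ?_⟩
  rw [integral_Ioi_of_hasDerivAt_of_nonneg' hd (fun x _ => by positivity) hl]
  norm_num

/-- the function used as zero-mode remainder in the base estimate -/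
lemma z_int {c : ℝ} (hc : 0 ≤ c) : ∃ z : ℝ → ℝ,
    IntegrableOn (fun ψ => (1 + ψ) ^ 100 * z ψ) (Ioi 0) ∧ (∀ ψ, 0 ≤ z ψ) ∧
    ∫ ψ in Ioi (0:ℝ), (1 + ψ) ^ 100 * z ψ ≤ c ∧
    ∀ ψ, 0 < ψ → c / (1 + ψ) ^ 196 ≤ z ψ := by
  have e : ∀ ψ ∈ Ioi (0:ℝ), c * (1 / (1 + ψ) ^ 2) = (1 + ψ) ^ 100 * (c / (1 + ψ) ^ 102) := by
    intro ψ hψ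
    have : (0:ℝ) < ψ := hψ
    have : (1 + ψ) ≠ 0 := by positivity
    field_simp
  refine ⟨fun ψ => c / (1 + ψ) ^ 102, ?_, fun ψ => div_nonneg hc (Even.pow_nonneg (by decide) _),
    ?_, ?_⟩
  · exact IntegrableOn.congr_fun (inv_sq_int.1.const_mul c) e measurableSet_Ioi
  · rw [← setIntegral_congr_fun measurableSet_Ioi e, integral_const_mul, inv_sq_int.2, mul_one]
  · intro ψ hψ
    refine div_le_div_of_nonneg_left hc (by positivity) ?_
    exact pow_le_pow_right₀ (by linarith) (by norm_num)

end BQ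

/-! ### Part 6: the nonlinearity -/

namespace BQ

lemma ybounds {u : ℝ} (hu : |u| ≤ 1/2) :
    0 < Real.sqrt (1 + u) ∧ |1 / Real.sqrt (1 + u)| ≤ 2 ∧ |1 - 1 / Real.sqrt (1 + u)| ≤ 2 * |u| := by
  have h1 := (abs_le.1 hu).1
  have hs : 1/2 ≤ Real.sqrt (1 + u) := Real.le_sqrt_of_sq_le (by linarith)
  have h0 : 0 < Real.sqrt (1 + u) := by linarith
  have hsq : Real.sqrt (1 + u) ^ 2 = 1 + u := Real.sq_sqrt (by linarith)
  refine ⟨h0, ?_, ?_⟩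
  · rw [abs_of_pos (by positivity), div_le_iff₀ h0]; linarith
  · have e : 1 - 1 / Real.sqrt (1 + u)
        = u / (Real.sqrt (1 + u) * (Real.sqrt (1 + u) + 1)) := by
      have : Real.sqrt (1 + u) + 1 ≠ 0 := by positivity
      field_simp
      linear_combination hsq
    rw [e, abs_div, abs_of_pos (by positivity : 0 < Real.sqrt (1 + u) * (Real.sqrt (1 + u) + 1)),
      div_le_iff₀ (by positivity)]
    have : 1 ≤ 2 * (Real.sqrt (1 + u) * (Real.sqrt (1 + u) + 1)) := by nlinarith
    nlinarith [abs_nonneg u]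

lemma yderiv {u : ℝ → ℝ} {u1 s : ℝ} (hu : HasDerivAt u u1 s) (hb : |u s| ≤ 1/2) :
    HasDerivAt (fun s => 1 / Real.sqrt (1 + u s))
      (-(1/2) * u1 * (1 / Real.sqrt (1 + u s)) ^ 3) s := by
  have h1 := (abs_le.1 hb).1
  have h0 := (ybounds hb).1
  have hsq : Real.sqrt (1 + u s) ^ 2 = 1 + u s := Real.sq_sqrt (by linarith)
  have d1 := (hu.const_add 1).sqrt (by linarith)
  have d2 := (hasDerivAt_const s (1:ℝ)).fun_div d1 h0.ne'
  refine d2.congr_deriv ?_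
  field_simp
  ring

lemma slice_f {p p1 p2 p3 r r1 r2 : ℝ → ℝ} {R D : ℝ}
    (dp0 : ∀ s, HasDerivAt p (p1 s) s) (dp1 : ∀ s, HasDerivAt p1 (p2 s) s)
    (dp2 : ∀ s, HasDerivAt p2 (p3 s) s)
    (dr0 : ∀ s, HasDerivAt r (r1 s) s) (dr1 : ∀ s, HasDerivAt r1 (r2 s) s)
    (hr0 : ∀ s, |r s| ≤ R) (hr1 : ∀ s, |r1 s| ≤ R) (hr2 : ∀ s, |r2 s| ≤ R)
    (h0 : ∀ s, |p s| ≤ D) (h1 : ∀ s, |p1 s| ≤ D) (hD : D ≤ 1) (hRD : R * D ≤ 1/2) :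
    ∃ f1 f2 : ℝ → ℝ,
      (∀ s, HasDerivAt (fun s => (1 - 1 / Real.sqrt (1 + r s * p s)) * p1 s) (f1 s) s) ∧
      (∀ s, HasDerivAt f1 (f2 s) s) ∧
      (∀ s, |(1 - 1 / Real.sqrt (1 + r s * p s)) * p1 s| ≤ 200 * (R + R ^ 2) * D * |p1 s|) ∧
      (∀ s, |f1 s| ≤ 200 * (R + R ^ 2) * D * (|p1 s| + |p2 s|)) ∧
      (∀ s, |f2 s| ≤ 200 * (R + R ^ 2) * D * (|p1 s| + |p2 s| + |p3 s|)) := by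
  have hR : 0 ≤ R := (abs_nonneg _).trans (hr0 0)
  have hD0 : 0 ≤ D := (abs_nonneg _).trans (h0 0)
  have mulb : ∀ {a b A C : ℝ}, |a| ≤ A → |b| ≤ C → |a * b| ≤ A * C := by
    intro a b A C ha hb
    rw [abs_mul]
    exact mul_le_mul ha hb (abs_nonneg _) ((abs_nonneg _).trans ha)
  obtain ⟨u, hu⟩ : ∃ u : ℝ → ℝ, u = fun s => r s * p s := ⟨_, rfl⟩
  obtain ⟨u1, hu1⟩ : ∃ u1 : ℝ → ℝ, u1 = fun s => r1 s * p s + r s * p1 s := ⟨_, rfl⟩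
  obtain ⟨u2, hu2⟩ : ∃ u2 : ℝ → ℝ, u2 = fun s => (r2 s * p s + r1 s * p1 s)
    + (r1 s * p1 s + r s * p2 s) := ⟨_, rfl⟩
  have du : ∀ s, HasDerivAt u (u1 s) s := by
    intro s; rw [hu, hu1]; exact (dr0 s).fun_mul (dp0 s)
  have du1 : ∀ s, HasDerivAt u1 (u2 s) s := by
    intro s; rw [hu1, hu2]
    exact ((dr1 s).fun_mul (dp0 s)).fun_add ((dr0 s).fun_mul (dp1 s))
  have bu : ∀ s, |u s| ≤ R * D := by
    intro s; rw [hu]; exact mulb (hr0 s) (h0 s)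
  have bu' : ∀ s, |u s| ≤ 1/2 := fun s => (bu s).trans hRD
  have bu1 : ∀ s, |u1 s| ≤ 2 * R * D := by
    intro s; rw [hu1]
    refine (abs_add_le _ _).trans ?_
    linarith [mulb (hr1 s) (h0 s), mulb (hr0 s) (h1 s)]
  have bu2 : ∀ s, |u2 s| ≤ 3 * R * D + R * |p2 s| := by
    intro s; rw [hu2]
    refine (abs_add_le _ _).trans ?_
    have := abs_add_le (r2 s * p s) (r1 s * p1 s)
    have := abs_add_le (r1 s * p1 s) (r s * p2 s)
    linarith [mulb (hr2 s) (h0 s), mulb (hr1 s) (h1 s), mulb (hr0 s) (le_refl |p2 s|)]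
  obtain ⟨y, hy⟩ : ∃ y : ℝ → ℝ, y = fun s => 1 / Real.sqrt (1 + u s) := ⟨_, rfl⟩
  have dy : ∀ s, HasDerivAt y (-(1/2) * u1 s * y s ^ 3) s := by
    intro s; rw [hy]; exact yderiv (du s) (bu' s)
  have by2 : ∀ s, |y s| ≤ 2 := by intro s; rw [hy]; exact (ybounds (bu' s)).2.1
  have by1 : ∀ s, |1 - y s| ≤ 2 * R * D := by
    intro s; rw [hy]
    refine (ybounds (bu' s)).2.2.trans ?_
    linarith [bu s]
  have by3 : ∀ s, |y s ^ 3| ≤ 8 := by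
    intro s; rw [abs_pow]
    calc |y s| ^ 3 ≤ 2 ^ 3 := pow_le_pow_left₀ (abs_nonneg _) (by2 s) 3
      _ = 8 := by norm_num
  have by5 : ∀ s, |y s ^ 5| ≤ 32 := by
    intro s; rw [abs_pow]
    calc |y s| ^ 5 ≤ 2 ^ 5 := pow_le_pow_left₀ (abs_nonneg _) (by2 s) 5
      _ = 32 := by norm_num
  have ef : (fun s => (1 - 1 / Real.sqrt (1 + r s * p s)) * p1 s) = fun s => (1 - y s) * p1 s := by
    rw [hy, hu]
  have hRR : 0 ≤ R ^ 2 := sq_nonneg R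
  refine ⟨fun s => (1/2) * (u1 s * y s ^ 3 * p1 s) + (1 - y s) * p2 s,
    fun s => (1/2) * (u2 s * y s ^ 3 * p1 s) - (3/4) * (u1 s * u1 s * y s ^ 5 * p1 s)
      + u1 s * y s ^ 3 * p2 s + (1 - y s) * p3 s, ?_, ?_, ?_, ?_, ?_⟩
  · intro s
    rw [ef]
    refine (((dy s).const_sub 1).fun_mul (dp1 s)).congr_deriv ?_
    ring
  · intro s
    have d := ((((du1 s).fun_mul ((dy s).fun_pow 3)).fun_mul (dp1 s)).const_mul (1/2)).fun_add
      (((dy s).const_sub 1).fun_mul (dp2 s))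
    refine d.congr_deriv ?_
    norm_num
    ring
  · intro s
    have e := congrFun ef s
    rw [e]
    refine (mulb (by1 s) le_rfl).trans ?_
    refine mul_le_mul_of_nonneg_right ?_ (abs_nonneg _)
    nlinarith [mul_nonneg hRR hD0, mul_nonneg hR hD0]
  · intro s
    have t1 := mulb (mulb (bu1 s) (by3 s)) (le_refl |p1 s|)
    have t2 := mulb (by1 s) (le_refl |p2 s|)
    have t3 := abs_add_le ((1/2) * (u1 s * y s ^ 3 * p1 s)) ((1 - y s) * p2 s)
    rw [abs_mul (1/2), abs_of_pos (by norm_num : (0:ℝ) < 1/2)] at t3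
    have n1 : 0 ≤ R * D * |p1 s| := by positivity
    have n2 : 0 ≤ R * D * |p2 s| := by positivity
    have n3 : 0 ≤ R ^ 2 * D * |p1 s| := by positivity
    have n4 : 0 ≤ R ^ 2 * D * |p2 s| := by positivity
    change |(1/2) * (u1 s * y s ^ 3 * p1 s) + (1 - y s) * p2 s| ≤ _
    linarith
  · intro s
    have t1 := mulb (mulb (bu2 s) (by3 s)) (le_refl |p1 s|)
    have t2 := mulb (mulb (mulb (bu1 s) (bu1 s)) (by5 s)) (le_refl |p1 s|)
    have t3 := mulb (mulb (bu1 s) (by3 s)) (le_refl |p2 s|)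
    have t4 := mulb (by1 s) (le_refl |p3 s|)
    have s1 := abs_add_le ((1/2) * (u2 s * y s ^ 3 * p1 s) - (3/4) * (u1 s * u1 s * y s ^ 5 * p1 s)
      + u1 s * y s ^ 3 * p2 s) ((1 - y s) * p3 s)
    have s2 := abs_add_le ((1/2) * (u2 s * y s ^ 3 * p1 s)
      - (3/4) * (u1 s * u1 s * y s ^ 5 * p1 s)) (u1 s * y s ^ 3 * p2 s)
    have s3 := abs_sub ((1/2) * (u2 s * y s ^ 3 * p1 s)) ((3/4) * (u1 s * u1 s * y s ^ 5 * p1 s))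
    rw [abs_mul (1/2), abs_of_pos (by norm_num : (0:ℝ) < 1/2), abs_mul (3/4),
      abs_of_pos (by norm_num : (0:ℝ) < 3/4)] at s3
    have n1 : 0 ≤ R * D * |p1 s| := by positivity
    have n2 : 0 ≤ R * D * |p2 s| := by positivity
    have n3 : 0 ≤ R ^ 2 * D * |p1 s| := by positivity
    have n4 : 0 ≤ R ^ 2 * D * |p2 s| := by positivity
    have n5 : 0 ≤ R * D * |p3 s| := by positivity
    have n6 : 0 ≤ R ^ 2 * D * |p3 s| := by positivity
    have n7 : R * |p2 s| * |p1 s| ≤ R * |p2 s| * D :=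
      mul_le_mul_of_nonneg_left (h1 s) (by positivity)
    have n8 : R ^ 2 * D * |p1 s| * D ≤ R ^ 2 * D * |p1 s| * 1 :=
      mul_le_mul_of_nonneg_left hD (by positivity)
    change |(1/2) * (u2 s * y s ^ 3 * p1 s) - (3/4) * (u1 s * u1 s * y s ^ 5 * p1 s)
      + u1 s * y s ^ 3 * p2 s + (1 - y s) * p3 s| ≤ _
    linarith

/-- pointwise decay from the weighted norms -/
lemma ptw {L : ℝ} (hL : 0 < L) {v : ℝ → ℝ → ℝ} (hv : Smooth2 v) (hp : PeriodicS L v) {e : ℝ}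
    (f0 : Fin50 L v) (f1 : Fin50 L (dp v)) (f2 : Fin50 L (ds v)) (f3 : Fin50 L (dp (ds v)))
    (n0 : N L v ≤ e) (n1 : N L (dp v) ≤ e) (n2 : N L (ds v) ≤ e) (n3 : N L (dp (ds v)) ≤ e)
    (s : ℝ) {ψ : ℝ} (hψ : 0 < ψ) :
    (1 + ψ) ^ 100 * (v s ψ) ^ 2 ≤ (2 * L + 2 / L) * 102 * e := by
  have h := sob hL hv hp s ψ
  have a1 := sup_psi hL zero_le_one le_rfl hv f0 f1 hψ.le
  have a2 := sup_psi hL zero_le_one le_rfl (sm_ds hv) f2 f3 hψ.le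
  simp only [NW_one] at a1 a2
  unfold W at a1 a2
  rw [one_mul] at a1 a2
  have h' := mul_le_mul_of_nonneg_left h (by positivity : 0 ≤ (1 + ψ) ^ 100)
  have b1 := mul_le_mul_of_nonneg_left (a1.trans (by linarith : _ ≤ 102 * e))
    (by positivity : 0 ≤ 2 / L)
  have b2 := mul_le_mul_of_nonneg_left (a2.trans (by linarith : _ ≤ 102 * e))
    (by positivity : 0 ≤ 2 * L)
  linarith

lemma fin3 {L : ℝ} (hL : 0 < L) {u v1 v2 v3 : ℝ → ℝ → ℝ} (hu : Smooth2 u) (h1 : Smooth2 v1)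
    (h2 : Smooth2 v2) (h3 : Smooth2 v3) {c : ℝ}
    (h : ∀ s ψ, 0 < ψ → |u s ψ| ≤ c * (|v1 s ψ| + |v2 s ψ| + |v3 s ψ|))
    (f1 : Fin50 L v1) (f2 : Fin50 L v2) (f3 : Fin50 L v3) :
    Fin50 L u ∧ N L u ≤ 3 * c ^ 2 * (N L v1 + N L v2 + N L v3) := by
  have hB : ∀ ψ, 0 < ψ → B L u u ψ ≤ 3 * c ^ 2 * (B L v1 v1 ψ + B L v2 v2 ψ + B L v3 v3 ψ) := by
    intro ψ hψ
    have cu := sm_cont_s hu ψ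
    have c1 := sm_cont_s h1 ψ
    have c2 := sm_cont_s h2 ψ
    have c3 := sm_cont_s h3 ψ
    have e1 : B L u u ψ ≤ J L (fun s ψ => 3 * c ^ 2 * ((v1 s ψ * v1 s ψ + v2 s ψ * v2 s ψ)
        + v3 s ψ * v3 s ψ)) ψ := by
      refine J_mono hL (by fun_prop) (by fun_prop) fun s => ?_
      have hh := h s ψ hψ
      have q := mul_self_le_mul_self (abs_nonneg _) hh
      rw [abs_mul_abs_self] at q
      refine q.trans ?_
      have k1 := abs_mul_abs_self (v1 s ψ)
      have k2 := abs_mul_abs_self (v2 s ψ)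
      have k3 := abs_mul_abs_self (v3 s ψ)
      rw [← k1, ← k2, ← k3]
      generalize |v1 s ψ| = x
      generalize |v2 s ψ| = y
      generalize |v3 s ψ| = w
      have : (x + y + w) ^ 2 ≤ 3 * (x * x + y * y + w * w) := by
        nlinarith [sq_nonneg (x - y), sq_nonneg (y - w), sq_nonneg (x - w)]
      have := mul_le_mul_of_nonneg_left this (sq_nonneg c)
      linarith
    rw [J_smul, J_add L (sm_add (sm_mul h1 h1) (sm_mul h2 h2)) (sm_mul h3 h3),
      J_add L (sm_mul h1 h1) (sm_mul h2 h2)] at e1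
    exact e1
  have hi : IntegrableOn (fun ψ => 3 * c ^ 2 * (((1 + ψ) ^ 100 * B L v1 v1 ψ
      + (1 + ψ) ^ 100 * B L v2 v2 ψ) + (1 + ψ) ^ 100 * B L v3 v3 ψ)) (Ioi 0) :=
    ((f1.add f2).add f3).const_mul _
  have fu : Fin50 L u := by
    refine Integrable.mono' hi ?_ ?_
    · have := B_cont L hu hu
      exact (by fun_prop : Continuous fun ψ => (1 + ψ) ^ 100 * B L u u ψ).aestronglyMeasurable
    · refine (ae_restrict_mem measurableSet_Ioi).mono fun ψ hψ => ?_
      have hψ' : (0:ℝ) < ψ := hψ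
      rw [Real.norm_eq_abs, abs_of_nonneg (mul_nonneg (by positivity) (B_nonneg hL u ψ))]
      have := mul_le_mul_of_nonneg_left (hB ψ hψ') (by positivity : 0 ≤ (1 + ψ) ^ 100)
      linarith
  refine ⟨fu, ?_⟩
  have := int_lin (G := fun _ => 0) (c1 := 3 * c ^ 2) (c2 := 3 * c ^ 2) (c3 := 3 * c ^ 2) fu
    integrableOn_zero f1 f2 f3 (by
      intro ψ hψ
      have := mul_le_mul_of_nonneg_left (hB ψ hψ) (by positivity : 0 ≤ (1 + ψ) ^ 100)
      linarith)
  simp only [integral_zero] at this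
  unfold N
  linarith

end BQ

/-! ### Part 7: weighted estimates of the forcing -/

namespace BQ

lemma nonlin {L : ℝ} (hL : 0 < L) {r : ℝ → ℝ} (hr : ContDiff ℝ (⊤ : ℕ∞) r) {R C A e : ℝ}
    (hC : C = (2 * L + 2 / L) * 102) (hA : A = 200 * (R + R ^ 2))
    (hr0 : ∀ s, |r s| ≤ R) (hr1 : ∀ s, |deriv r s| ≤ R) (hr2 : ∀ s, |deriv (deriv r) s| ≤ R)
    {P F : ℝ → ℝ → ℝ} (sP : Smooth2 P) (pP : PeriodicS L P) (sF : Smooth2 F)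
    (hF : ∀ s ψ, 0 < ψ → F s ψ = (1 - 1 / Real.sqrt (1 + r s * P s ψ)) * ds P s ψ)
    (f0 : Fin50 L P) (f1 : Fin50 L (ds P)) (f2 : Fin50 L (ds (ds P)))
    (f3 : Fin50 L (ds (ds (ds P))))
    (g0 : Fin50 L (dp P)) (g1 : Fin50 L (dp (ds P))) (g2 : Fin50 L (dp (ds (ds P))))
    (n0 : N L P ≤ e) (n1 : N L (ds P) ≤ e) (n2 : N L (ds (ds P)) ≤ e)
    (n3 : N L (ds (ds (ds P))) ≤ e)
    (m0 : N L (dp P) ≤ e) (m1 : N L (dp (ds P)) ≤ e) (m2 : N L (dp (ds (ds P))) ≤ e)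
    (he : C * e ≤ 1) (hRe : R ^ 2 * (C * e) ≤ 1 / 4) :
    (Fin50 L F ∧ N L F ≤ 9 * A ^ 2 * C * e ^ 2) ∧
    (Fin50 L (ds F) ∧ N L (ds F) ≤ 9 * A ^ 2 * C * e ^ 2) ∧
    (Fin50 L (ds (ds F)) ∧ N L (ds (ds F)) ≤ 9 * A ^ 2 * C * e ^ 2) ∧
    (∀ s ψ, 0 < ψ → |F s ψ| ≤ A * C * e / (1 + ψ) ^ 100) := by
  have hC0 : 0 < C := by rw [hC]; positivity
  have he0 : 0 ≤ e := (N_nonneg hL P).trans n0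
  have hR : 0 ≤ R := (abs_nonneg _).trans (hr0 0)
  have hA0 : 0 ≤ A := by rw [hA]; positivity
  have s1 := sm_ds sP
  have s2 := sm_ds s1
  have s3 := sm_ds s2
  obtain ⟨d, hd⟩ : ∃ d, d = Real.sqrt (C * e) := ⟨_, rfl⟩
  have hd0 : 0 ≤ d := by rw [hd]; exact Real.sqrt_nonneg _
  have hd2 : d ^ 2 = C * e := by rw [hd]; exact Real.sq_sqrt (by positivity)
  have hd1 : d ≤ 1 := by nlinarith
  have hRd : R * d ≤ 1 / 2 := by
    have : (R * d) ^ 2 ≤ (1 / 2) ^ 2 := by rw [mul_pow, hd2]; linarith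
    exact (abs_le.1 (abs_le_of_sq_le_sq this (by norm_num))).2
  have dec : ∀ v : ℝ → ℝ → ℝ, (∀ s ψ, 0 < ψ → (1 + ψ) ^ 100 * (v s ψ) ^ 2 ≤ C * e) →
      ∀ s ψ, 0 < ψ → |v s ψ| ≤ d / (1 + ψ) ^ 50 := by
    intro v hv s ψ hψ
    rw [le_div_iff₀ (by positivity), hd]
    refine Real.le_sqrt_of_sq_le ?_
    rw [mul_pow, sq_abs, ← pow_mul, mul_comm]
    exact hv s ψ hψ
  have b0 : ∀ s ψ, 0 < ψ → |P s ψ| ≤ d / (1 + ψ) ^ 50 := dec P (fun s ψ hψ => by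
    rw [hC]; exact ptw hL sP pP f0 g0 f1 g1 n0 m0 n1 m1 s hψ)
  have b1 : ∀ s ψ, 0 < ψ → |ds P s ψ| ≤ d / (1 + ψ) ^ 50 := dec (ds P) (fun s ψ hψ => by
    rw [hC]; exact ptw hL s1 (per_ds pP) f1 g1 f2 g2 n1 m1 n2 m2 s hψ)
  have dr0 : ∀ s, HasDerivAt r (deriv r s) s := fun s =>
    (hr.differentiable (by simp) s).hasDerivAt
  have hr' : ContDiff ℝ (⊤ : ℕ∞) (deriv r) := (contDiff_infty_iff_deriv.1 hr).2
  have dr1 : ∀ s, HasDerivAt (deriv r) (deriv (deriv r) s) s := fun s =>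
    (hr'.differentiable (by simp) s).hasDerivAt
  have hDd : ∀ ψ : ℝ, 0 < ψ → d / (1 + ψ) ^ 50 ≤ d := fun ψ hψ =>
    div_le_self hd0 (one_le_pow₀ (by linarith))
  have main : ∀ ψ, 0 < ψ → ∀ s,
      |F s ψ| ≤ A * (d / (1 + ψ) ^ 50) * |ds P s ψ| ∧
      |ds F s ψ| ≤ A * (d / (1 + ψ) ^ 50) * (|ds P s ψ| + |ds (ds P) s ψ|) ∧
      |ds (ds F) s ψ| ≤ A * (d / (1 + ψ) ^ 50)
        * (|ds P s ψ| + |ds (ds P) s ψ| + |ds (ds (ds P)) s ψ|) := by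
    intro ψ hψ s
    obtain ⟨F1, F2, e1, e2, h0, h1, h2⟩ := slice_f (R := R) (D := d / (1 + ψ) ^ 50)
      (fun s => has_s sP s ψ) (fun s => has_s s1 s ψ)
      (fun s => has_s s2 s ψ) dr0 dr1 hr0 hr1 hr2 (fun s => b0 s ψ hψ) (fun s => b1 s ψ hψ)
      ((hDd ψ hψ).trans hd1) ((mul_le_mul_of_nonneg_left (hDd ψ hψ) hR).trans hRd)
    have q0 : (fun s => F s ψ) = fun s => (1 - 1 / Real.sqrt (1 + r s * P s ψ)) * ds P s ψ := by
      funext s; exact hF s ψ hψ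
    have q1 : ∀ s, ds F s ψ = F1 s := by
      intro s; unfold ds; rw [q0]; exact (e1 s).deriv
    have q2 : ds (ds F) s ψ = F2 s := by
      have : (fun s => ds F s ψ) = F1 := funext q1
      change deriv (fun s => ds F s ψ) s = _
      rw [this]; exact (e2 s).deriv
    rw [q1, q2, hF s ψ hψ, hA]
    exact ⟨h0 s, h1 s, h2 s⟩
  have coef : ∀ ψ : ℝ, 0 < ψ → A * (d / (1 + ψ) ^ 50) ≤ A * d := fun ψ hψ =>
    mul_le_mul_of_nonneg_left (hDd ψ hψ) hA0
  have sumb : 3 * (A * d) ^ 2 * (N L (ds P) + N L (ds (ds P)) + N L (ds (ds (ds P))))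
      ≤ 9 * A ^ 2 * C * e ^ 2 := by
    rw [mul_pow, hd2]
    have := mul_le_mul_of_nonneg_left (by linarith :
      N L (ds P) + N L (ds (ds P)) + N L (ds (ds (ds P))) ≤ 3 * e)
      (by positivity : 0 ≤ 3 * (A ^ 2 * (C * e)))
    linarith
  have fin : ∀ u : ℝ → ℝ → ℝ, Smooth2 u → (∀ s ψ, 0 < ψ → |u s ψ| ≤ A * (d / (1 + ψ) ^ 50)
      * (|ds P s ψ| + |ds (ds P) s ψ| + |ds (ds (ds P)) s ψ|)) →
      Fin50 L u ∧ N L u ≤ 9 * A ^ 2 * C * e ^ 2 := by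
    intro u su hu
    have := fin3 hL su s1 s2 s3 (c := A * d) (fun s ψ hψ => (hu s ψ hψ).trans
      (mul_le_mul_of_nonneg_right (coef ψ hψ) (by positivity))) f1 f2 f3
    exact ⟨this.1, this.2.trans sumb⟩
  have cnn : ∀ ψ : ℝ, 0 < ψ → 0 ≤ A * (d / (1 + ψ) ^ 50) := fun ψ hψ => by positivity
  refine ⟨fin F sF fun s ψ hψ => ?_, fin _ (sm_ds sF) fun s ψ hψ => ?_,
    fin _ (sm_ds (sm_ds sF)) fun s ψ hψ => (main ψ hψ s).2.2, fun s ψ hψ => ?_⟩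
  · refine (main ψ hψ s).1.trans (mul_le_mul_of_nonneg_left ?_ (cnn ψ hψ))
    linarith [abs_nonneg (ds (ds P) s ψ), abs_nonneg (ds (ds (ds P)) s ψ)]
  · refine (main ψ hψ s).2.1.trans (mul_le_mul_of_nonneg_left ?_ (cnn ψ hψ))
    linarith [abs_nonneg (ds (ds (ds P)) s ψ)]
  · refine (main ψ hψ s).1.trans ((mul_le_mul_of_nonneg_left (b1 s ψ hψ) (cnn ψ hψ)).trans
      (le_of_eq ?_))
    have : A * C * e = A * d ^ 2 := by rw [hd2]; ring
    rw [this]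
    field_simp

end BQ

/-! ### Part 8: estimates for `Q`, `∂_s Q`, `∂_s² Q` -/

namespace BQ

lemma step_eq {a : ℝ → ℝ} (ha : ContDiff ℝ (⊤ : ℕ∞) a) {h F : ℝ → ℝ → ℝ} (sh : Smooth2 h)
    (sF : Smooth2 F) (eqn : ∀ s ψ, ds h s ψ = a s * dp (dp h) s ψ + F s ψ) (s ψ : ℝ) :
    ds (ds h) s ψ = a s * dp (dp (ds h)) s ψ + (deriv a s * dp (dp h) s ψ + ds F s ψ) := by
  have e : (fun s => ds h s ψ) = fun s => a s * dp (dp h) s ψ + F s ψ := by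
    funext s; exact eqn s ψ
  have d := (((ha.differentiable (by simp) s).hasDerivAt).fun_mul
    (has_s (sm_dp (sm_dp sh)) s ψ)).fun_add (has_s sF s ψ)
  have : ds (ds h) s ψ = deriv (fun s => ds h s ψ) s := rfl
  rw [this, e, d.deriv, ds_dp (sm_dp sh), ds_dp sh]
  ring

lemma assemble {L : ℝ} (hL : 0 < L) {a0 a1 a2 : ℝ} (ha0 : 0 < a0) :
    ∃ K : ℝ, 0 < K ∧ ∀ a : ℝ → ℝ, ContDiff ℝ (⊤ : ℕ∞) a → (∀ s, a0 ≤ a s) → (∀ s, a s ≤ a1) →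
      (∀ s, |deriv a s| ≤ a2) → (∀ s, |deriv (deriv a) s| ≤ a2) →
      ∀ Q F : ℝ → ℝ → ℝ, Smooth2 Q → PeriodicS L Q → Smooth2 F →
      (∀ s ψ, ds Q s ψ = a s * dp (dp Q) s ψ + F s ψ) →
      Fin50 L Q → Fin50 L (ds Q) → Fin50 L (ds (ds Q)) → Fin50 L (ds (ds (ds Q))) →
      Fin50 L (dp Q) → Fin50 L (dp (ds Q)) → Fin50 L (dp (ds (ds Q))) →
      Fin50 L (dp (dp Q)) → Fin50 L (dp (dp (ds Q))) → Fin50 L (dp (dp (ds (ds Q)))) →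
      Fin50 L F → Fin50 L (ds F) → Fin50 L (ds (ds F)) →
      ∀ Φ κ b : ℝ, N L F ≤ Φ → N L (ds F) ≤ Φ → N L (ds (ds F)) ≤ Φ → 0 ≤ κ → κ ^ 2 ≤ Φ →
      (∀ ψ, 0 < ψ → |J L F ψ| ≤ κ / (1 + ψ) ^ 100) →
      B L Q Q 0 ≤ b → B L (ds Q) (ds Q) 0 ≤ b → B L (ds (ds Q)) (ds (ds Q)) 0 ≤ b →
      B L (ds (ds (ds Q))) (ds (ds (ds Q))) 0 ≤ b →
      N L Q + N L (ds Q) + N L (dp Q) + N L (dp (dp Q)) ≤ K * (Φ + b) ∧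
      N L (ds Q) + N L (ds (ds Q)) + N L (dp (ds Q)) + N L (dp (dp (ds Q))) ≤ K * (Φ + b) ∧
      N L (ds (ds Q)) + N L (ds (ds (ds Q))) + N L (dp (ds (ds Q))) + N L (dp (dp (ds (ds Q))))
        ≤ K * (Φ + b) := by
  obtain ⟨K, hK, base⟩ := base_est hL (a0 := a0) (a1 := a1) (P := 2 * L ^ 2) ha0 (by positivity)
  obtain ⟨c, hc⟩ : ∃ c, c = 2 / (a0 ^ 2 * L) := ⟨_, rfl⟩
  have hc0 : 0 < c := by rw [hc]; positivity
  obtain ⟨K0, hK0⟩ : ∃ K0, K0 = K * (3 + c) := ⟨_, rfl⟩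
  have hK0p : 0 < K0 := by rw [hK0]; positivity
  obtain ⟨K1, hK1⟩ : ∃ K1, K1 = K * (2 * a2 ^ 2 * K0 + 4) := ⟨_, rfl⟩
  have hK1p : 0 < K1 := by rw [hK1]; positivity
  obtain ⟨K2, hK2⟩ : ∃ K2, K2 = K * (12 * a2 ^ 2 * K0 + 12 * a2 ^ 2 * K1 + 5) := ⟨_, rfl⟩
  have hK2p : 0 < K2 := by rw [hK2]; positivity
  refine ⟨K0 + K1 + K2, by positivity, ?_⟩
  intro a ha haL haU had hadd Q F sQ pQ sF eqn f0 f1 f2 f3 g0 g1 g2 k0 k1 k2 h0 h1 h2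
    Φ κ b n0 n1 n2 hκ hκΦ hJ b0 b1 b2 b3
  have hab : ∀ s, |a s| ≤ a1 := fun s => by
    rw [abs_of_nonneg (ha0.le.trans (haL s))]; exact haU s
  have hb : 0 ≤ b := (B_nonneg hL _ _).trans b0
  have hΦ : 0 ≤ Φ := (sq_nonneg κ).trans hκΦ
  have ha' : ContDiff ℝ (⊤ : ℕ∞) (deriv a) := (contDiff_infty_iff_deriv.1 ha).2
  have ha'' : ContDiff ℝ (⊤ : ℕ∞) (deriv (deriv a)) := (contDiff_infty_iff_deriv.1 ha').2
  have s1 := sm_ds sQ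
  have s2 := sm_ds s1
  have p1 := per_ds pQ
  have p2 := per_ds p1
  have q0 := sm_dp (sm_dp sQ)
  have q1 := sm_dp (sm_dp s1)
  -- level 0
  have hm : 0 < ∫ s in (0:ℝ)..L, a s := by
    refine intervalIntegral.intervalIntegral_pos_of_pos_on
      (ha.continuous.intervalIntegrable _ _) (fun s _ => lt_of_lt_of_le ha0 (haL s)) hL
  have hm2 : a0 * L ≤ ∫ s in (0:ℝ)..L, a s := by
    have : ∫ s in (0:ℝ)..L, a0 ≤ ∫ s in (0:ℝ)..L, a s :=
      intervalIntegral.integral_mono_on hL.le (Continuous.intervalIntegrable (by fun_prop) _ _)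
        (ha.continuous.intervalIntegrable _ _) (fun s _ => haL s)
    rw [intervalIntegral.integral_const, smul_eq_mul] at this
    linarith
  have JF : ∀ ψ, J L (fun s ψ => a s * dp (dp Q) s ψ) ψ = - J L F ψ := by
    intro ψ
    have e1 := J_ds L sQ pQ ψ
    have e2 := J_add L (sm_mul (sm_fst ha) q0) sF ψ
    have e3 : ds Q = fun s ψ => a s * dp (dp Q) s ψ + F s ψ := by
      funext s ψ; exact eqn s ψ
    rw [e3] at e1
    linarith
  have zm : ∀ ψ, 0 < ψ → |J L (fun s ψ => a s * Q s ψ) ψ| ≤ κ / (1 + ψ) ^ 98 := fun ψ hψ =>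
    zero_mode hL sQ ha hab f0 g0 k0 hκ (fun x hx => by rw [JF, abs_neg]; exact hJ x hx) hψ
  obtain ⟨z, zi, z0, zZ, zb⟩ := z_int (c := c * κ ^ 2) (by positivity)
  have L0 := base a ha haL haU Q F sQ pQ sF eqn f0 f1 g0 k0 h0 z (c * κ ^ 2) zi z0 zZ (by
    intro ψ hψ
    have e := poin_w hL sQ ha.continuous (fun s => ha0.le.trans (haL s)) hm rfl ψ
    refine e.trans (add_le_add_right ?_ _)
    refine le_trans ?_ (zb ψ hψ)
    have e1 : (J L (fun s ψ => a s * Q s ψ) ψ) ^ 2 ≤ κ ^ 2 / (1 + ψ) ^ 196 := by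
      have := pow_le_pow_left₀ (abs_nonneg _) (zm ψ hψ) 2
      rw [sq_abs, div_pow, ← pow_mul] at this
      exact this
    have e2 : 2 * L / (∫ s in (0:ℝ)..L, a s) ^ 2 ≤ c := by
      have : 2 * L / (∫ s in (0:ℝ)..L, a s) ^ 2 ≤ 2 * L / (a0 * L) ^ 2 := by gcongr
      refine this.trans (le_of_eq ?_)
      rw [hc]; field_simp
    calc _ ≤ c * (κ ^ 2 / (1 + ψ) ^ 196) := mul_le_mul e2 e1 (sq_nonneg _) hc0.le
      _ = _ := by ring)
  have R0 : N L Q + N L (ds Q) + N L (dp Q) + N L (dp (dp Q)) ≤ K0 * (Φ + b) := by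
    refine L0.trans ?_
    rw [hK0, mul_assoc]
    refine mul_le_mul_of_nonneg_left ?_ hK.le
    have t1 := mul_le_mul_of_nonneg_left hκΦ hc0.le
    have t2 := mul_nonneg hc0.le hb
    linarith
  have x0 := N_nonneg hL Q
  have x1 := N_nonneg hL (ds Q)
  have x2 := N_nonneg hL (dp Q)
  have y0 : N L (dp (dp Q)) ≤ K0 * (Φ + b) := by linarith
  -- level 1
  have sF1 := sm_add (sm_mul (sm_fst ha') q0) (sm_ds sF)
  have NF1 := fin_of_le hL (v := dp (dp Q)) (v' := ds F) (c := 2 * a2 ^ 2) (c' := 2) sF1 (by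
    intro ψ hψ
    have t1 := B_add_le hL (sm_mul (sm_fst ha') q0) (sm_ds sF) ψ
    have t2 := B_coef hL ha' had q0 ψ
    linarith) k0 h1
  have eq1 := step_eq ha sQ sF eqn
  have L1 := base a ha haL haU (ds Q) _ s1 p1 sF1 eq1 f1 f2 g1 k1 NF1.1 (fun _ => 0) 0
    (by simp) (by simp) (by simp) (by
    intro ψ hψ
    rw [add_zero]
    exact poin_zero hL s1 ψ (J_ds L sQ pQ ψ))
  have R1 : N L (ds Q) + N L (ds (ds Q)) + N L (dp (ds Q)) + N L (dp (dp (ds Q)))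
      ≤ K1 * (Φ + b) := by
    refine L1.trans ?_
    rw [hK1, mul_assoc]
    refine mul_le_mul_of_nonneg_left ?_ hK.le
    have t1 := mul_le_mul_of_nonneg_left y0 (by positivity : 0 ≤ 2 * a2 ^ 2)
    have t2 := NF1.2
    linarith
  have x3 := N_nonneg hL (ds (ds Q))
  have x4 := N_nonneg hL (dp (ds Q))
  have y1 : N L (dp (dp (ds Q))) ≤ K1 * (Φ + b) := by linarith
  -- level 2
  have sF2 := sm_add (sm_mul (sm_fst ha') q1) (sm_ds sF1)
  have eq2 := step_eq ha s1 sF1 eq1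
  have dF1 : ∀ s ψ, ds (fun s ψ => deriv a s * dp (dp Q) s ψ + ds F s ψ) s ψ
      = deriv (deriv a) s * dp (dp Q) s ψ + deriv a s * dp (dp (ds Q)) s ψ + ds (ds F) s ψ := by
    intro s ψ
    have d := (((ha'.differentiable (by simp) s).hasDerivAt).fun_mul
      (has_s q0 s ψ)).fun_add (has_s (sm_ds sF) s ψ)
    have := d.deriv
    rw [ds_dp (sm_dp sQ), ds_dp sQ] at this
    exact this
  have NF2 := fin3 hL (v1 := fun s ψ => a2 * dp (dp Q) s ψ) (v2 := fun s ψ => 2 * a2 * dp (dp (ds Q)) s ψ)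
    (v3 := ds (ds F)) (c := 1) sF2 (sm_mul (sm_fst contDiff_const) q0)
    (sm_mul (sm_fst contDiff_const) q1) (sm_ds (sm_ds sF)) (by
    intro s ψ hψ
    change |deriv a s * dp (dp (ds Q)) s ψ
      + ds (fun s ψ => deriv a s * dp (dp Q) s ψ + ds F s ψ) s ψ| ≤ _
    rw [dF1, one_mul]
    have ha2 : 0 ≤ a2 := (abs_nonneg _).trans (had 0)
    have t1 := mul_le_mul_of_nonneg_right (had s) (abs_nonneg (dp (dp (ds Q)) s ψ))
    have t2 := mul_le_mul_of_nonneg_right (hadd s) (abs_nonneg (dp (dp Q) s ψ))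
    rw [← abs_mul] at t1 t2
    have t3 : |a2 * dp (dp Q) s ψ| = a2 * |dp (dp Q) s ψ| := by rw [abs_mul, abs_of_nonneg ha2]
    have t4 : |2 * a2 * dp (dp (ds Q)) s ψ| = 2 * (a2 * |dp (dp (ds Q)) s ψ|) := by
      rw [abs_mul, abs_of_nonneg (by positivity)]; ring
    rw [t3, t4]
    have u1 := abs_add_le (deriv a s * dp (dp (ds Q)) s ψ) (deriv (deriv a) s * dp (dp Q) s ψ
      + deriv a s * dp (dp (ds Q)) s ψ + ds (ds F) s ψ)
    have u2 := abs_add_le (deriv (deriv a) s * dp (dp Q) s ψ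
      + deriv a s * dp (dp (ds Q)) s ψ) (ds (ds F) s ψ)
    have u3 := abs_add_le (deriv (deriv a) s * dp (dp Q) s ψ) (deriv a s * dp (dp (ds Q)) s ψ)
    linarith)
  have cm : ∀ (c : ℝ) (v : ℝ → ℝ → ℝ), Smooth2 v → Fin50 L v →
      Fin50 L (fun s ψ => c * v s ψ) ∧ N L (fun s ψ => c * v s ψ) ≤ c ^ 2 * N L v := by
    intro c v sv fv
    have := fin_of_le hL (v := v) (v' := v) (c := c ^ 2) (c' := 0)
      (sm_mul (sm_fst (a := fun _ => c) contDiff_const) sv) (by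
      intro ψ _
      have := B_coef hL (a := fun _ => c) (a1 := |c|) contDiff_const (fun _ => le_rfl) sv ψ
      rw [sq_abs] at this
      linarith) fv fv
    refine ⟨this.1, this.2.trans (by linarith)⟩
  have c0 := cm a2 _ q0 k0
  have c1 := cm (2 * a2) _ q1 k1
  have NF2' := NF2 c0.1 c1.1 h2
  have L2 := base a ha haL haU (ds (ds Q)) _ s2 p2 sF2 eq2 f2 f3 g2 k2 NF2'.1 (fun _ => 0) 0
    (by simp) (by simp) (by simp) (by
    intro ψ hψ
    rw [add_zero]
    exact poin_zero hL s2 ψ (J_ds L s1 p1 ψ))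
  have R2 : N L (ds (ds Q)) + N L (ds (ds (ds Q))) + N L (dp (ds (ds Q)))
      + N L (dp (dp (ds (ds Q)))) ≤ K2 * (Φ + b) := by
    refine L2.trans ?_
    rw [hK2, mul_assoc]
    refine mul_le_mul_of_nonneg_left ?_ hK.le
    have t0 := mul_le_mul_of_nonneg_left y0 (by positivity : 0 ≤ 3 * a2 ^ 2)
    have t1 := mul_le_mul_of_nonneg_left y1 (by positivity : 0 ≤ 12 * a2 ^ 2)
    have t2 := NF2'.2
    have t3 := c0.2
    have t4 := c1.2
    have t5 : 0 ≤ a2 ^ 2 * K0 * (Φ + b) := by positivity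
    linarith
  have hΦb : 0 ≤ Φ + b := by linarith
  have w0 := mul_nonneg hK0p.le hΦb
  have w1 := mul_nonneg hK1p.le hΦb
  have w2 := mul_nonneg hK2p.le hΦb
  refine ⟨?_, ?_, ?_⟩ <;> linarith

end BQ

/-! ### Part 9: auxiliary facts for the final assembly -/

namespace BQ

lemma L2sq_nonneg (L : ℝ) (h : ℝ → ℝ → ℝ) : 0 ≤ L2sq L h :=
  integral_nonneg fun _ => sq_nonneg _

/-- one term of the `X` norm -/
noncomputable def XT (L : ℝ) (h : ℝ → ℝ → ℝ) (k m : ℕ) : ℝ :=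
  L2sq L (wt m (dS k h)) + L2sq L (wt m (dS (k+1) h))
      + L2sq L (wt m (dPsi 1 (dS k h))) + L2sq L (wt m (dPsi 2 (dS k h)))

lemma XT_nonneg (L : ℝ) (h : ℝ → ℝ → ℝ) (k m : ℕ) : 0 ≤ XT L h k m := by
  unfold XT
  have := L2sq_nonneg L (wt m (dS k h))
  have := L2sq_nonneg L (wt m (dS (k+1) h))
  have := L2sq_nonneg L (wt m (dPsi 1 (dS k h)))
  have := L2sq_nonneg L (wt m (dPsi 2 (dS k h)))
  linarith

lemma XT_le (L : ℝ) (h : ℝ → ℝ → ℝ) {k : ℕ} (hk : k ≤ 2) : XT L h k 50 ≤ XnormSq L 2 50 h := by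
  have e : XnormSq L 2 50 h
      = ∑ k' ∈ Finset.range (2+1), ∑ m' ∈ Finset.range (50+1), XT L h k' m' := rfl
  rw [e]
  refine le_trans ?_ (Finset.single_le_sum (f := fun k' => ∑ m' ∈ Finset.range (50+1), XT L h k' m')
    (fun i _ => Finset.sum_nonneg fun j _ => XT_nonneg L h i j)
    (Finset.mem_range.2 (by omega : k < 2 + 1)))
  exact Finset.single_le_sum (f := fun m' => XT L h k m') (fun j _ => XT_nonneg L h k j)
    (Finset.mem_range.2 (by omega : 50 < 50 + 1))

lemma X_nonneg (L : ℝ) (h : ℝ → ℝ → ℝ) : 0 ≤ XnormSq L 2 50 h :=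
  (XT_nonneg L h 0 50).trans (XT_le L h (by norm_num))

lemma X_le_of {L : ℝ} {h : ℝ → ℝ → ℝ} {S : ℝ} (hS : ∀ k ≤ 2, ∀ m ≤ 50, XT L h k m ≤ S) :
    XnormSq L 2 50 h ≤ 153 * S := by
  have e : XnormSq L 2 50 h
      = ∑ k' ∈ Finset.range (2+1), ∑ m' ∈ Finset.range (50+1), XT L h k' m' := rfl
  rw [e]
  have : ∑ k' ∈ Finset.range (2+1), ∑ m' ∈ Finset.range (50+1), XT L h k' m'
      ≤ ∑ k' ∈ Finset.range (2+1), ∑ m' ∈ Finset.range (50+1), S := by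
    refine Finset.sum_le_sum fun k hk => Finset.sum_le_sum fun m hm => hS k ?_ m ?_
    · have := Finset.mem_range.1 hk; omega
    · have := Finset.mem_range.1 hm; omega
  refine this.trans (le_of_eq ?_)
  simp only [Finset.sum_const, Finset.card_range, nsmul_eq_mul]
  norm_num
  ring

/-- the finiteness conditions in terms of `Fin50` -/
lemma fin_all {L : ℝ} (hL : 0 < L) {h : ℝ → ℝ → ℝ} (hf : XFinite L 2 50 h) {k : ℕ} (hk : k ≤ 2) :
    Fin50 L (dS k h) ∧ Fin50 L (ds (dS k h)) ∧ Fin50 L (dp (dS k h)) ∧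
      Fin50 L (dp (dp (dS k h))) ∧
    (XT L h k 50 = N L (dS k h) + N L (ds (dS k h)) + N L (dp (dS k h)) + N L (dp (dp (dS k h)))) ∧
    (∀ m ≤ 50, XT L h k m
      ≤ N L (dS k h) + N L (ds (dS k h)) + N L (dp (dS k h)) + N L (dp (dp (dS k h)))) := by
  have h50 := hf k hk 50 le_rfl
  simp only [dS_succ, dPsi_one, dPsi_two] at h50
  obtain ⟨a, b, c, d⟩ := h50
  refine ⟨fin50_of hL a, fin50_of hL b, fin50_of hL c, fin50_of hL d, ?_, ?_⟩
  · unfold XT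
    simp only [dS_succ, dPsi_one, dPsi_two]
    rw [N_eq hL a, N_eq hL b, N_eq hL c, N_eq hL d]
  · intro m hm
    have hm' := hf k hk m hm
    simp only [dS_succ, dPsi_one, dPsi_two] at hm'
    obtain ⟨a', b', c', d'⟩ := hm'
    unfold XT
    simp only [dS_succ, dPsi_one, dPsi_two]
    have := L2sq_le hL hm a' a
    have := L2sq_le hL hm b' b
    have := L2sq_le hL hm c' c
    have := L2sq_le hL hm d' d
    linarith

lemma per_bdd {L : ℝ} (hL : 0 < L) {f : ℝ → ℝ} (hf : Continuous f) (hp : Function.Periodic f L) :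
    ∃ M, 0 ≤ M ∧ ∀ s, |f s| ≤ M := by
  obtain ⟨M, hM⟩ := (isCompact_Icc (a := (0:ℝ)) (b := L)).exists_bound_of_continuousOn
    hf.continuousOn
  refine ⟨max M 0, le_max_right _ _, fun s => ?_⟩
  obtain ⟨t, ht, e⟩ := hp.exists_mem_Ico₀ hL s
  rw [e]
  exact (hM t ⟨ht.1, ht.2.le⟩).trans (le_max_left _ _)

lemma per_deriv {L : ℝ} {f : ℝ → ℝ} (hp : Function.Periodic f L) :
    Function.Periodic (deriv f) L := by
  intro s
  have e : f = fun x => f (x + L) := by funext x; exact (hp x).symm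
  conv_rhs => rw [e]
  rw [deriv_comp_add_const]

lemma sm_deriv {f : ℝ → ℝ} (hf : ContDiff ℝ (⊤ : ℕ∞) f) : ContDiff ℝ (⊤ : ℕ∞) (deriv f) :=
  (contDiff_infty_iff_deriv.1 hf).2

lemma bdd3 {L : ℝ} (hL : 0 < L) {f : ℝ → ℝ} (hf : ContDiff ℝ (⊤ : ℕ∞) f)
    (hp : Function.Periodic f L) :
    ∃ M, 0 ≤ M ∧ (∀ s, |f s| ≤ M) ∧ (∀ s, |deriv f s| ≤ M) ∧ (∀ s, |deriv (deriv f) s| ≤ M) ∧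
      (∀ s, |deriv (deriv (deriv f)) s| ≤ M) := by
  obtain ⟨M0, p0, h0⟩ := per_bdd hL hf.continuous hp
  obtain ⟨M1, p1, h1⟩ := per_bdd hL (sm_deriv hf).continuous (per_deriv hp)
  obtain ⟨M2, p2, h2⟩ := per_bdd hL (sm_deriv (sm_deriv hf)).continuous (per_deriv (per_deriv hp))
  obtain ⟨M3, p3, h3⟩ := per_bdd hL (sm_deriv (sm_deriv (sm_deriv hf))).continuous
    (per_deriv (per_deriv (per_deriv hp)))
  refine ⟨M0 + M1 + M2 + M3, by positivity, fun s => ?_, fun s => ?_, fun s => ?_, fun s => ?_⟩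
  · linarith [h0 s]
  · linarith [h1 s]
  · linarith [h2 s]
  · linarith [h3 s]

/-- differentiating boundary data -/
lemma bdry_ds {h : ℝ → ℝ → ℝ} {x y w : ℝ → ℝ} {c1 c2 c3 : ℝ}
    (hx : ContDiff ℝ (⊤ : ℕ∞) x) (hy : ContDiff ℝ (⊤ : ℕ∞) y) (hw : ContDiff ℝ (⊤ : ℕ∞) w)
    (e : ∀ s, h s 0 = c1 * x s + c2 * y s + c3 * w s) (s : ℝ) :
    ds h s 0 = c1 * deriv x s + c2 * deriv y s + c3 * deriv w s := by
  have e' : (fun s => h s 0) = fun s => c1 * x s + c2 * y s + c3 * w s := funext e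
  unfold ds
  rw [e']
  exact (((((hx.differentiable (by simp) s).hasDerivAt).const_mul c1).fun_add
    (((hy.differentiable (by simp) s).hasDerivAt).const_mul c2)).fun_add
    (((hw.differentiable (by simp) s).hasDerivAt).const_mul c3)).deriv

lemma bdry_B {L : ℝ} (hL : 0 < L) {h : ℝ → ℝ → ℝ} (sh : Smooth2 h) {x y w : ℝ → ℝ}
    {c1 c2 c3 c M : ℝ} (e : ∀ s, h s 0 = c1 * x s + c2 * y s + c3 * w s)
    (hc : |c1| + |c2| + |c3| ≤ c) (hx : ∀ s, |x s| ≤ M) (hy : ∀ s, |y s| ≤ M)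
    (hw : ∀ s, |w s| ≤ M) : B L h h 0 ≤ L * (c * M) ^ 2 := by
  have hM : 0 ≤ M := (abs_nonneg _).trans (hx 0)
  have c0 := sm_cont_s sh 0
  have hb : ∀ s, |h s 0| ≤ c * M := by
    intro s
    rw [e]
    have t1 := abs_add_le (c1 * x s + c2 * y s) (c3 * w s)
    have t2 := abs_add_le (c1 * x s) (c2 * y s)
    rw [abs_mul] at t1 t2
    rw [abs_mul c2] at t2
    have u1 := mul_le_mul_of_nonneg_left (hx s) (abs_nonneg c1)
    have u2 := mul_le_mul_of_nonneg_left (hy s) (abs_nonneg c2)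
    have u3 := mul_le_mul_of_nonneg_left (hw s) (abs_nonneg c3)
    have u4 := mul_le_mul_of_nonneg_right hc hM
    linarith
  have : B L h h 0 ≤ ∫ s in (0:ℝ)..L, (c * M) ^ 2 := by
    refine intervalIntegral.integral_mono_on hL.le (Continuous.intervalIntegrable (by fun_prop) _ _)
      (Continuous.intervalIntegrable (by fun_prop) _ _) fun t ht => ?_
    rw [← sq]
    exact sq_le_sq' (by linarith [(abs_le.1 (hb t)).1]) (abs_le.1 (hb t)).2
  rw [intervalIntegral.integral_const, smul_eq_mul, sub_zero] at this
  exact this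

lemma omega_bdd {L : ℝ} {q g : ℝ → ℝ} (hq : Continuous q) (hg : Continuous g) :
    ∃ Ω, 0 ≤ Ω ∧ ∀ ε, 0 < ε → ε < 1 → |omegaBarStar L q g ε| ≤ Ω := by
  obtain ⟨X, hX⟩ : ∃ X, X = ((1/L) * ∫ s in (0:ℝ)..L, 2 * g s * (q s) ^ 2)
    / ((1/L) * ∫ s in (0:ℝ)..L, (q s) ^ 3) := ⟨_, rfl⟩
  obtain ⟨Y, hY⟩ : ∃ Y, Y = ((1/L) * ∫ s in (0:ℝ)..L, (g s) ^ 2 * q s)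
    / ((1/L) * ∫ s in (0:ℝ)..L, (q s) ^ 3) := ⟨_, rfl⟩
  refine ⟨|X| + |Y|, by positivity, fun ε h0 h1 => ?_⟩
  have e : omegaBarStar L q g ε = X + ε * Y := by
    unfold omegaBarStar
    have : ∫ s in (0:ℝ)..L, (2 * g s * (q s) ^ 2 + ε * (g s) ^ 2 * q s)
        = (∫ s in (0:ℝ)..L, 2 * g s * (q s) ^ 2) + ε * ∫ s in (0:ℝ)..L, (g s) ^ 2 * q s := by
      rw [← intervalIntegral.integral_const_mul, ← intervalIntegral.integral_add
        (Continuous.intervalIntegrable (by fun_prop) _ _)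
        (Continuous.intervalIntegrable (by fun_prop) _ _)]
      congr 1; funext s; ring
    rw [this, hX, hY]
    ring
  rw [e]
  refine (abs_add_le _ _).trans ?_
  rw [abs_mul, abs_of_pos h0]
  have := mul_le_mul_of_nonneg_right h1.le (abs_nonneg Y)
  linarith

/-- rewriting the nonlinearity -/
lemma fNonlin_eq {q : ℝ → ℝ} {ω : ℝ} (hω : 0 < ω) (hq : ∀ s, 0 < q s) (P : ℝ → ℝ → ℝ) (s ψ : ℝ) :
    fNonlin q ω P s ψ
      = (1 - 1 / Real.sqrt (1 + ((ω ^ 2)⁻¹ * ((q s) ^ 2)⁻¹) * P s ψ)) * ds P s ψ := by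
  unfold fNonlin
  rw [dS_one]
  have h := mul_pos hω (hq s)
  have hqs := hq s
  have e : ω ^ 2 * q s ^ 2 + P s ψ
      = (ω * q s) ^ 2 * (1 + ((ω ^ 2)⁻¹ * ((q s) ^ 2)⁻¹) * P s ψ) := by
    field_simp
  rw [e, Real.sqrt_mul (sq_nonneg _), Real.sqrt_sq h.le]
  have := mul_div_mul_left 1 (Real.sqrt (1 + ((ω ^ 2)⁻¹ * ((q s) ^ 2)⁻¹) * P s ψ)) h.ne'
  rw [mul_one] at this
  rw [this]

lemma J_abs_le {L : ℝ} (hL : 0 < L) {F : ℝ → ℝ → ℝ} {ψ c : ℝ}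
    (h : ∀ s, |F s ψ| ≤ c) : |J L F ψ| ≤ L * c := by
  have := intervalIntegral.norm_integral_le_of_norm_le_const (a := (0:ℝ)) (b := L)
    (f := fun s => F s ψ) (C := c) (fun x _ => h x)
  rw [sub_zero, abs_of_pos hL, mul_comm] at this
  exact this

end BQ

/-! ### Part 10: final assembly -/

namespace BQ

lemma eps_facts {ε K : ℝ} (h0 : 0 < ε) (h1 : ε < 1) (hK : 0 ≤ K) (h : ε ≤ (1 / (K + 1)) ^ 50) :
    ((ε ^ (0.99 : ℝ)) ^ 2 ≤ ε) ∧ (K * ε ^ 2 ≤ (ε ^ (0.99 : ℝ)) ^ 2) ∧ ε ^ (0.97 : ℝ) ≤ 1 := by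
  have e1 : (ε ^ (0.99 : ℝ)) ^ 2 = ε ^ (1.98 : ℝ) := by
    rw [← Real.rpow_natCast, ← Real.rpow_mul h0.le]; norm_num
  have e2 : ε ^ 2 = ε ^ (0.02 : ℝ) * ε ^ (1.98 : ℝ) := by
    rw [← Real.rpow_add h0, ← Real.rpow_natCast]; norm_num
  refine ⟨?_, ?_, Real.rpow_le_one h0.le h1.le (by norm_num)⟩
  · rw [e1]
    calc ε ^ (1.98 : ℝ) ≤ ε ^ (1 : ℝ) :=
          Real.rpow_le_rpow_of_exponent_ge h0 h1.le (by norm_num)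
      _ = ε := Real.rpow_one ε
  · rw [e1, e2, ← mul_assoc]
    have hp : 0 < 1 / (K + 1) := by positivity
    have h2 : ε ^ (0.02 : ℝ) ≤ 1 / (K + 1) := by
      calc ε ^ (0.02 : ℝ) ≤ ((1 / (K + 1)) ^ 50) ^ (0.02 : ℝ) :=
            Real.rpow_le_rpow h0.le h (by norm_num)
        _ = 1 / (K + 1) := by
            rw [← Real.rpow_natCast, ← Real.rpow_mul hp.le]; norm_num
    have h3 : K * ε ^ (0.02 : ℝ) ≤ 1 := by
      calc K * ε ^ (0.02 : ℝ) ≤ K * (1 / (K + 1)) := mul_le_mul_of_nonneg_left h2 hK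
        _ ≤ 1 := by
          rw [mul_one_div, div_le_one (by positivity)]; linarith
    have := mul_le_mul_of_nonneg_right h3 (Real.rpow_nonneg h0.le (1.98 : ℝ))
    linarith

set_option maxHeartbeats 4000000 in
theorem main
    (L : ℝ) (hL : 0 < L)
    (q_e : ℝ → ℝ) (hqe : ContDiff ℝ (⊤ : ℕ∞) q_e) (hqeper : Function.Periodic q_e L)
    (hqepos : ∀ s, 0 < q_e s)
    (g : ℝ → ℝ) (hg : ContDiff ℝ (⊤ : ℕ∞) g) (hgper : Function.Periodic g L) :
    ∃ ε₀ : ℝ, 0 < ε₀ ∧ ε₀ < 1 ∧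
      ∀ ε : ℝ, 0 < ε → ε < ε₀ →
      ∀ ω' ωbar' : ℝ, 0 < ω' → ω' ^ 2 = 1 - ε * ωbar' →
        |ωbar' - omegaBarStar L q_e g ε| ≤ ε ^ (0.97 : ℝ) →
      ∀ Qprev : ℝ → ℝ → ℝ,
        Smooth2 Qprev → PeriodicS L Qprev → XFinite L 2 50 Qprev →
        Xnorm L 2 50 Qprev ≤ ε ^ (0.99 : ℝ) →
      ∀ ωbar : ℝ, |ωbar - omegaBarStar L q_e g ε| ≤ ε ^ (0.97 : ℝ) →
      ∀ Q : ℝ → ℝ → ℝ,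
        Smooth2 Q → PeriodicS L Q →
        (∀ s : ℝ, ∀ ψ > (0:ℝ),
          dS 1 Q s ψ - ω' * q_e s * dPsi 2 Q s ψ = fNonlin q_e ω' Qprev s ψ) →
        (∀ s : ℝ, Q s 0
          = ε * ωbar * (q_e s) ^ 2 + 2 * ε * g s * q_e s + ε ^ 2 * (g s) ^ 2) →
        XFinite L 2 50 Q →
        Xnorm L 2 50 Q ≤ ε ^ (0.99 : ℝ) := by
  -- bounds on the data
  have hρ : ContDiff ℝ (⊤ : ℕ∞) (fun s => ((q_e s) ^ 2)⁻¹) :=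
    (hqe.pow 2).inv fun s => (pow_pos (hqepos s) 2).ne'
  have hx : ContDiff ℝ (⊤ : ℕ∞) (fun s => (q_e s) ^ 2) := hqe.pow 2
  have hy : ContDiff ℝ (⊤ : ℕ∞) (fun s => g s * q_e s) := hg.mul hqe
  have hw : ContDiff ℝ (⊤ : ℕ∞) (fun s => (g s) ^ 2) := hg.pow 2
  obtain ⟨Mq, hMq, q0, q1, q2, -⟩ := bdd3 hL hqe hqeper
  obtain ⟨Mρ, hMρ, ρ0, ρ1, ρ2, -⟩ := bdd3 hL hρ (fun s => by simp only [hqeper s])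
  obtain ⟨Mx, hMx, x0, x1, x2, x3⟩ := bdd3 hL hx (fun s => by simp only [hqeper s])
  obtain ⟨My, hMy, y0, y1, y2, y3⟩ := bdd3 hL hy (fun s => by simp only [hqeper s, hgper s])
  obtain ⟨Mw, hMw, w0, w1, w2, w3⟩ := bdd3 hL hw (fun s => by simp only [hgper s])
  obtain ⟨Mi, hMi, i0⟩ := per_bdd hL (f := fun s => (q_e s)⁻¹)
    (hqe.continuous.inv₀ fun s => (hqepos s).ne') (fun s => by simp only [hqeper s])
  obtain ⟨ql, hql⟩ : ∃ ql, ql = 1 / (Mi + 1) := ⟨_, rfl⟩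
  have hql0 : 0 < ql := by rw [hql]; positivity
  have hqlow : ∀ s, ql ≤ q_e s := by
    intro s
    have h1 := hqepos s
    have h2 := (le_abs_self _).trans (i0 s)
    rw [hql, div_le_iff₀ (by positivity)]
    have h3 : 1 ≤ q_e s * Mi := by
      have := mul_le_mul_of_nonneg_left h2 h1.le
      rwa [mul_inv_cancel₀ h1.ne'] at this
    linarith
  obtain ⟨Ω, hΩ, hΩb⟩ := omega_bdd (L := L) hqe.continuous hg.continuous
  obtain ⟨M, hM⟩ : ∃ M, M = Mx + My + Mw := ⟨_, rfl⟩
  have hM0 : 0 ≤ M := by rw [hM]; positivity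
  have Mx_le : Mx ≤ M := by linarith
  have My_le : My ≤ M := by linarith
  have Mw_le : Mw ≤ M := by linarith
  obtain ⟨R, hR⟩ : ∃ R, R = 4 * Mρ := ⟨_, rfl⟩
  have hR0 : 0 ≤ R := by rw [hR]; positivity
  obtain ⟨C, hC⟩ : ∃ C, C = (2 * L + 2 / L) * 102 := ⟨_, rfl⟩
  have hC0 : 0 < C := by rw [hC]; positivity
  obtain ⟨A, hA⟩ : ∃ A, A = 200 * (R + R ^ 2) := ⟨_, rfl⟩
  have hA0 : 0 ≤ A := by rw [hA]; positivity
  obtain ⟨K, hK, hass⟩ := assemble hL (a0 := ql / 2) (a1 := 2 * Mq) (a2 := 2 * Mq) (by positivity)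
  obtain ⟨D, hD⟩ : ∃ D, D = 9 * A ^ 2 * C + (L * (A * C)) ^ 2 := ⟨_, rfl⟩
  have hD0 : 0 ≤ D := by rw [hD]; positivity
  obtain ⟨K', hK'⟩ : ∃ K', K' = 153 * (K * (D + L * ((Ω + 4) * M) ^ 2)) := ⟨_, rfl⟩
  have hK'0 : 0 ≤ K' := by rw [hK']; positivity
  refine ⟨min (1/2) (min (3 / (4 * (Ω + 1))) (min (1 / C) (min (1 / (4 * (R ^ 2 * C + 1)))
    ((1 / (K' + 1)) ^ 50)))), by positivity, lt_of_le_of_lt (min_le_left _ _) (by norm_num), ?_⟩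
  intro ε hε hεlt ω ωb' hω hωeq hωb' P sP pP fP nP ωb hωb Q sQ pQ pde bdry fQ
  rw [lt_min_iff, lt_min_iff, lt_min_iff, lt_min_iff] at hεlt
  obtain ⟨l1, l2, l3, l4, l5⟩ := hεlt
  have hε1 : ε < 1 := by linarith
  obtain ⟨ef1, ef2, ef3⟩ := eps_facts hε hε1 hK'0 l5.le
  have hstar := hΩb ε hε hε1
  have hb1 : |ωb'| ≤ Ω + 1 := by
    have := abs_sub_abs_le_abs_sub ωb' (omegaBarStar L q_e g ε)
    linarith
  have hb2 : |ωb| ≤ Ω + 1 := by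
    have := abs_sub_abs_le_abs_sub ωb (omegaBarStar L q_e g ε)
    linarith
  have l2' : ε * (Ω + 1) ≤ 3 / 4 := by
    rw [lt_div_iff₀ (by positivity)] at l2
    linarith
  have l3' : C * ε ≤ 1 := by
    rw [lt_div_iff₀ hC0] at l3
    linarith
  have l4' : R ^ 2 * (C * ε) ≤ 1 / 4 := by
    rw [lt_div_iff₀ (by positivity)] at l4
    linarith
  have hεb : |ε * ωb'| ≤ 3 / 4 := by
    rw [abs_mul, abs_of_pos hε]
    exact (mul_le_mul_of_nonneg_left hb1 hε.le).trans l2'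
  have hω2l : 1 / 4 ≤ ω ^ 2 := by rw [hωeq]; linarith [(abs_le.1 hεb).2]
  have hω2u : ω ^ 2 ≤ 7 / 4 := by rw [hωeq]; linarith [(abs_le.1 hεb).1]
  have hωl : 1 / 2 ≤ ω := (pow_le_pow_iff_left₀ (by norm_num) hω.le two_ne_zero).1 (by linarith)
  have hωu : ω ≤ 2 := (pow_le_pow_iff_left₀ hω.le (by norm_num) two_ne_zero).1 (by linarith)
  have hωi : (ω ^ 2)⁻¹ ≤ 4 := by
    rw [inv_le_comm₀ (by positivity) (by norm_num)]; linarith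
  have hωi0 : 0 ≤ (ω ^ 2)⁻¹ := by positivity
  -- the coefficient
  obtain ⟨a, ha⟩ : ∃ a : ℝ → ℝ, a = fun s => ω * q_e s := ⟨_, rfl⟩
  have ha_s : ∀ s, a s = ω * q_e s := fun s => by rw [ha]
  have hac : ContDiff ℝ (⊤ : ℕ∞) a := by rw [ha]; exact contDiff_const.mul hqe
  have ha1 : deriv a = fun s => ω * deriv q_e s := by
    funext s; rw [ha, deriv_const_mul_field]
  have ha2 : deriv (deriv a) = fun s => ω * deriv (deriv q_e) s := by
    funext s; rw [ha1, deriv_const_mul_field]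
  -- the ratio
  obtain ⟨ρ, hρd⟩ : ∃ ρ : ℝ → ℝ, ρ = fun s => ((q_e s) ^ 2)⁻¹ := ⟨_, rfl⟩
  rw [← hρd] at hρ ρ1 ρ2
  have ρ0' : ∀ s, |ρ s| ≤ Mρ := by rw [hρd]; exact ρ0
  obtain ⟨r, hr⟩ : ∃ r : ℝ → ℝ, r = fun s => (ω ^ 2)⁻¹ * ρ s := ⟨_, rfl⟩
  have hrc : ContDiff ℝ (⊤ : ℕ∞) r := by rw [hr]; exact contDiff_const.mul hρ
  have hr1 : deriv r = fun s => (ω ^ 2)⁻¹ * deriv ρ s := by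
    funext s; rw [hr, deriv_const_mul_field]
  have hr2 : deriv (deriv r) = fun s => (ω ^ 2)⁻¹ * deriv (deriv ρ) s := by
    funext s; rw [hr1, deriv_const_mul_field]
  have rb : ∀ z, |z| ≤ Mρ → |(ω ^ 2)⁻¹ * z| ≤ R := by
    intro z hz
    rw [abs_mul, abs_of_nonneg hωi0, hR]
    exact mul_le_mul hωi hz (abs_nonneg _) (by norm_num)
  have ab : ∀ z, |z| ≤ Mq → |ω * z| ≤ 2 * Mq := by
    intro z hz
    rw [abs_mul, abs_of_pos hω]
    exact mul_le_mul hωu hz (abs_nonneg _) (by norm_num)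
  -- the forcing
  obtain ⟨F, hFd⟩ : ∃ F : ℝ → ℝ → ℝ, F = fun s ψ => ds Q s ψ - a s * dp (dp Q) s ψ := ⟨_, rfl⟩
  have sF : Smooth2 F := by
    rw [hFd]
    exact sm_sub (sm_ds sQ) (sm_mul (sm_fst hac) (sm_dp (sm_dp sQ)))
  have hF : ∀ s ψ, 0 < ψ → F s ψ = (1 - 1 / Real.sqrt (1 + r s * P s ψ)) * ds P s ψ := by
    intro s ψ hψ
    have h1 := pde s ψ hψ
    rw [fNonlin_eq hω hqepos, dS_one, dPsi_two] at h1
    rw [hr, hρd, hFd, ha]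
    exact h1
  -- the norm of the previous iterate
  obtain ⟨e, he⟩ : ∃ e, e = (ε ^ (0.99 : ℝ)) ^ 2 := ⟨_, rfl⟩
  have he0 : 0 ≤ e := by rw [he]; positivity
  have heε : e ≤ ε := by rw [he]; exact ef1
  have hPe : XnormSq L 2 50 P ≤ e := by
    rw [he]
    exact (Real.sqrt_le_left (Real.rpow_nonneg hε.le _)).1 nP
  obtain ⟨f0, f1, g0, -, t0, -⟩ := fin_all hL fP (k := 0) (by norm_num)
  obtain ⟨-, f2, g1, -, t1, -⟩ := fin_all hL fP (k := 1) (by norm_num)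
  obtain ⟨-, f3, g2, -, t2, -⟩ := fin_all hL fP (k := 2) (by norm_num)
  have d2 : ∀ h, dS 2 h = ds (ds h) := fun h => by rw [dS_succ, dS_one]
  simp only [dS_zero, dS_one, d2] at f0 f1 f2 f3 g0 g1 g2 t0 t1 t2
  have u0 := (XT_le L P (k := 0) (by norm_num)).trans hPe
  have u1 := (XT_le L P (k := 1) (by norm_num)).trans hPe
  have u2 := (XT_le L P (k := 2) (by norm_num)).trans hPe
  rw [t0] at u0
  rw [t1] at u1
  rw [t2] at u2
  have nn := fun h => N_nonneg hL h
  have Ce : C * e ≤ 1 := (mul_le_mul_of_nonneg_left heε hC0.le).trans l3'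
  have RCe : R ^ 2 * (C * e) ≤ 1 / 4 :=
    (mul_le_mul_of_nonneg_left (mul_le_mul_of_nonneg_left heε hC0.le) (sq_nonneg R)).trans l4'
  obtain ⟨⟨F0, NF0⟩, ⟨F1, NF1⟩, ⟨F2, NF2⟩, FP⟩ := nonlin hL hrc hC hA
    (fun s => by rw [hr]; exact rb _ (ρ0' s)) (fun s => by rw [hr1]; exact rb _ (ρ1 s))
    (fun s => by rw [hr2]; exact rb _ (ρ2 s)) sP pP sF hF f0 f1 f2 f3 g0 g1 g2
    (by linarith [nn P, nn (ds P), nn (dp P), nn (dp (dp P))])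
    (by linarith [nn P, nn (ds P), nn (dp P), nn (dp (dp P))])
    (by linarith [nn (ds P), nn (ds (ds P)), nn (dp (ds P)), nn (dp (dp (ds P)))])
    (by linarith [nn (ds (ds P)), nn (ds (ds (ds P))), nn (dp (ds (ds P))),
      nn (dp (dp (ds (ds P))))])
    (by linarith [nn P, nn (ds P), nn (dp P), nn (dp (dp P))])
    (by linarith [nn (ds P), nn (ds (ds P)), nn (dp (ds P)), nn (dp (dp (ds P)))])
    (by linarith [nn (ds (ds P)), nn (ds (ds (ds P))), nn (dp (ds (ds P))),
      nn (dp (dp (ds (ds P))))])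
    Ce RCe
  -- boundary data
  have bd0 : ∀ s, Q s 0 = (ε * ωb) * (q_e s) ^ 2 + (2 * ε) * (g s * q_e s) + ε ^ 2 * (g s) ^ 2 := by
    intro s; rw [bdry]; ring
  have bd1 := bdry_ds hx hy hw bd0
  have bd2 := bdry_ds (sm_deriv hx) (sm_deriv hy) (sm_deriv hw) bd1
  have bd3 := bdry_ds (sm_deriv (sm_deriv hx)) (sm_deriv (sm_deriv hy)) (sm_deriv (sm_deriv hw)) bd2
  have hc : |ε * ωb| + |2 * ε| + |ε ^ 2| ≤ ε * (Ω + 4) := by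
    rw [abs_mul, abs_of_pos hε, abs_of_pos (by positivity : 0 < 2 * ε),
      abs_of_pos (by positivity : 0 < ε ^ 2)]
    nlinarith [mul_le_mul_of_nonneg_left hb2 hε.le]
  have s1 := sm_ds sQ
  have s2 := sm_ds s1
  have s3 := sm_ds s2
  have B0 := bdry_B hL sQ bd0 hc (fun s => (x0 s).trans Mx_le) (fun s => (y0 s).trans My_le)
    (fun s => (w0 s).trans Mw_le)
  have B1 := bdry_B hL s1 bd1 hc (fun s => (x1 s).trans Mx_le) (fun s => (y1 s).trans My_le)
    (fun s => (w1 s).trans Mw_le)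
  have B2 := bdry_B hL s2 bd2 hc (fun s => (x2 s).trans Mx_le) (fun s => (y2 s).trans My_le)
    (fun s => (w2 s).trans Mw_le)
  have B3 := bdry_B hL s3 bd3 hc (fun s => (x3 s).trans Mx_le) (fun s => (y3 s).trans My_le)
    (fun s => (w3 s).trans Mw_le)
  -- the linear estimate
  obtain ⟨j0, j1, k0, m0, -, v0⟩ := fin_all hL fQ (k := 0) (by norm_num)
  obtain ⟨-, j2, k1, m1, -, v1⟩ := fin_all hL fQ (k := 1) (by norm_num)
  obtain ⟨-, j3, k2, m2, -, v2⟩ := fin_all hL fQ (k := 2) (by norm_num)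
  simp only [dS_zero, dS_one, d2] at j0 j1 j2 j3 k0 k1 k2 m0 m1 m2 v0 v1 v2
  have hΦ : 9 * A ^ 2 * C * e ^ 2 ≤ D * e ^ 2 :=
    mul_le_mul_of_nonneg_right (by rw [hD]; linarith [sq_nonneg (L * (A * C))]) (sq_nonneg e)
  have hκ : (L * (A * C * e)) ^ 2 ≤ D * e ^ 2 := by
    have : (L * (A * C * e)) ^ 2 = (L * (A * C)) ^ 2 * e ^ 2 := by ring
    rw [this]
    refine mul_le_mul_of_nonneg_right ?_ (sq_nonneg e)
    rw [hD]
    have : 0 ≤ 9 * A ^ 2 * C := by positivity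
    linarith
  obtain ⟨S0, S1, S2⟩ := hass a hac
    (fun s => by
      rw [ha_s]
      have h1 := hqlow s
      have h2 := mul_le_mul_of_nonneg_right hωl (hqepos s).le
      linarith)
    (fun s => by rw [ha_s]; exact (le_abs_self _).trans (ab _ (q0 s)))
    (fun s => by rw [ha1]; exact ab _ (q1 s))
    (fun s => by rw [ha2]; exact ab _ (q2 s))
    Q F sQ pQ sF (fun s ψ => by rw [hFd]; ring) j0 j1 j2 j3 k0 k1 k2 m0 m1 m2 F0 F1 F2
    (D * e ^ 2) (L * (A * C * e)) (L * (ε * (Ω + 4) * M) ^ 2)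
    (NF0.trans hΦ) (NF1.trans hΦ) (NF2.trans hΦ) (by positivity) hκ
    (fun ψ hψ => by
      rw [mul_div_assoc]
      exact J_abs_le hL fun s => FP s ψ hψ)
    B0 B1 B2 B3
  -- conclusion
  have hS : D * e ^ 2 + L * (ε * (Ω + 4) * M) ^ 2 ≤ (D + L * ((Ω + 4) * M) ^ 2) * ε ^ 2 := by
    have h1 : e ^ 2 ≤ ε ^ 2 := pow_le_pow_left₀ he0 heε 2
    have h2 := mul_le_mul_of_nonneg_left h1 hD0
    have h3 : L * (ε * (Ω + 4) * M) ^ 2 = L * ((Ω + 4) * M) ^ 2 * ε ^ 2 := by ring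
    rw [h3, add_mul]
    linarith
  have hS' := mul_le_mul_of_nonneg_left hS hK.le
  have hX : XnormSq L 2 50 Q ≤ 153 * (K * ((D + L * ((Ω + 4) * M) ^ 2) * ε ^ 2)) := by
    refine X_le_of ?_
    intro k hk m hm
    interval_cases k
    · exact ((v0 m hm).trans S0).trans hS'
    · exact ((v1 m hm).trans S1).trans hS'
    · exact ((v2 m hm).trans S2).trans hS'
  have hfin : XnormSq L 2 50 Q ≤ (ε ^ (0.99 : ℝ)) ^ 2 := by
    refine hX.trans (le_trans (le_of_eq ?_) ef2)
    rw [hK']; ring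
  exact (Real.sqrt_le_left (Real.rpow_nonneg hε.le _)).2 hfin

end BQ

/-- **Propagation of the main bootstrap bound `‖Q_n‖_{X_{2,50}} ≤ ε^{0.99}` along the
iteration scheme.** -/
theorem bootstrap_Q_estimate
    (L : ℝ) (hL : 0 < L)
    (q_e : ℝ → ℝ) (hqe : ContDiff ℝ (⊤ : ℕ∞) q_e) (hqeper : Function.Periodic q_e L)
    (hqepos : ∀ s, 0 < q_e s)
    (g : ℝ → ℝ) (hg : ContDiff ℝ (⊤ : ℕ∞) g) (hgper : Function.Periodic g L) :
    ∃ ε₀ : ℝ, 0 < ε₀ ∧ ε₀ < 1 ∧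
      ∀ ε : ℝ, 0 < ε → ε < ε₀ →
      ∀ ω' ωbar' : ℝ, 0 < ω' → ω' ^ 2 = 1 - ε * ωbar' →
        |ωbar' - omegaBarStar L q_e g ε| ≤ ε ^ (0.97 : ℝ) →
      ∀ Qprev : ℝ → ℝ → ℝ,
        Smooth2 Qprev → PeriodicS L Qprev → XFinite L 2 50 Qprev →
        Xnorm L 2 50 Qprev ≤ ε ^ (0.99 : ℝ) →
      ∀ ωbar : ℝ, |ωbar - omegaBarStar L q_e g ε| ≤ ε ^ (0.97 : ℝ) →
      ∀ Q : ℝ → ℝ → ℝ,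
        Smooth2 Q → PeriodicS L Q →
        (∀ s : ℝ, ∀ ψ > (0:ℝ),
          dS 1 Q s ψ - ω' * q_e s * dPsi 2 Q s ψ = fNonlin q_e ω' Qprev s ψ) →
        (∀ s : ℝ, Q s 0
          = ε * ωbar * (q_e s) ^ 2 + 2 * ε * g s * q_e s + ε ^ 2 * (g s) ^ 2) →
        (∀ s : ℝ, Tendsto (fun ψ => Q s ψ) atTop (nhds 0)) →
        XFinite L 2 50 Q →
        Xnorm L 2 50 Q ≤ ε ^ (0.99 : ℝ) := by

  obtain ⟨ε₀, h0, h1, H⟩ := BQ.main L hL q_e hqe hqeper hqepos g hg hgper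
  exact ⟨ε₀, h0, h1, fun ε a b ω' ωbar' c d e P f1 f2 f3 f4 ωbar k Q s1 s2 s3 s4 _ s6 =>
    H ε a b ω' ωbar' c d e P f1 f2 f3 f4 ωbar k Q s1 s2 s3 s4 s6⟩
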